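/- arXiv:2010.09649 — 2 statements merged into one kernel-verified Lean document; each statement's English description precedes it below -/
import Mathlib

section
/- There exists an absolute constant c > 0 with the following property. For every d ≥ 1, every matrix A ∈ ℝ^{d×d}, every δ ∈ (0, 1/2], every ε ∈ (0, 1), and every integer ℓ ≥ c·log(1/δ)/ε², the Hutchinson estimator H_ℓ(A) satisfies |H_ℓ(A) − tr(A)| ≤ ε·‖A‖_F with probability at least 1 − δ. -/
open MeasureTheory Matrix

/-- The Frobenius norm of a real matrix. -/
noncomputable def frobNorm {m n : ℕ} (M : Matrix (Fin m) (Fin n) ℝ) : ℝ :=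
  Real.sqrt (∑ i, ∑ j, (M i j) ^ 2)

/-- The Rademacher distribution on `ℝ`: uniform on `{-1, +1}`. -/
noncomputable def rademacher : Measure ℝ :=
  ((1 : ENNReal) / 2) • Measure.dirac (-1) + ((1 : ENNReal) / 2) • Measure.dirac 1

instance : IsProbabilityMeasure rademacher := by
  constructor
  simp [rademacher]
  exact ENNReal.inv_two_add_inv_two

/-- The law of a `d × n` random matrix with i.i.d. Rademacher entries
(as a product measure on `Fin d → Fin n → ℝ`). -/
noncomputable def radMeasure (d n : ℕ) : Measure (Fin d → Fin n → ℝ) :=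
  Measure.pi fun _ => Measure.pi fun _ => rademacher

/-- Hutchinson's estimator with `n` queries, evaluated at the query matrix `g`. -/
noncomputable def hutch {d n : ℕ} (A : Matrix (Fin d) (Fin d) ℝ)
    (g : Fin d → Fin n → ℝ) : ℝ :=
  (1 / (n : ℝ)) * ((Matrix.of g)ᵀ * A * Matrix.of g).trace

/-!
By a union bound and Markov's inequality applied to `exp (n * hutch B g)`, where `B` is a multiple
of `±A` of Frobenius norm `min 1 ε / 8`, it is enough to know that a Rademacher vector `x` satisfies
`𝔼 exp (xᵀ B x) ≤ exp (tr B + 4 ‖B‖_F²)` whenever `‖B‖_F ≤ 1 / 4`: the columns of the query matrix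
are independent, and each contributes one such factor.

This exponential moment is bounded by averaging over one coordinate at a time. As a function of
`x 0`, the form is `B₀₀ + c x₀ + yᵀ B' y` with `c` linear in the other coordinates `y`, and
`cosh c ≤ exp (c² / 2)` leaves again the exponential of a quadratic form in `y`, with matrix
`B' + w wᵀ / 2` where `c = wᵀ y`. The update raises the trace by `‖w‖² / 2`; the row and column
removed from `B` carry enough Frobenius mass to pay for this, so `tr + 4 ‖·‖_F²` drops by at least
`B₀₀`.
-/

section ProductMeasure

theorem measurePreserving_curry_pi {ι κ X : Type*} [Fintype ι] [Fintype κ] [MeasurableSpace X]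
    (μ : ι → κ → Measure X) [∀ i j, IsProbabilityMeasure (μ i j)] :
    MeasurePreserving (MeasurableEquiv.curry ι κ X) (Measure.pi fun p : ι × κ ↦ μ p.1 p.2)
      (Measure.pi fun i ↦ Measure.pi (μ i)) :=
  ⟨(MeasurableEquiv.curry ι κ X).measurable, by
    simpa only [Measure.infinitePi_eq_pi] using Measure.infinitePi_map_curry μ⟩

theorem measurePreserving_flip_pi {ι κ X : Type*} [Fintype ι] [Fintype κ] [MeasurableSpace X]
    (μ : ι → κ → Measure X) [∀ i j, IsProbabilityMeasure (μ i j)] :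
    MeasurePreserving flip (Measure.pi fun i ↦ Measure.pi (μ i))
      (Measure.pi fun j ↦ Measure.pi fun i ↦ μ i j) := by
  have uncurry_pi := (measurePreserving_curry_pi μ).symm
  have swap_pi := measurePreserving_piCongrLeft (fun p : κ × ι ↦ μ p.2 p.1) (Equiv.prodComm ι κ)
  have curry_pi := measurePreserving_curry_pi fun j i ↦ μ i j
  exact curry_pi.comp (swap_pi.comp uncurry_pi)

theorem lintegral_pi_prod {ι : Type*} [Fintype ι] {α : ι → Type*} [∀ i, MeasurableSpace (α i)]
    (μ : ∀ i, Measure (α i)) [∀ i, IsProbabilityMeasure (μ i)] {f : ∀ i, α i → ENNReal}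
    (hf : ∀ i, Measurable (f i)) :
    ∫⁻ x, ∏ i, f i (x i) ∂Measure.pi μ = ∏ i, ∫⁻ a, f i a ∂μ i := by
  have indep : ProbabilityTheory.iIndepFun (fun i (x : ∀ i, α i) ↦ f i (x i)) (Measure.pi μ) :=
    ProbabilityTheory.iIndepFun_pi fun i ↦ (hf i).aemeasurable
  calc ∫⁻ x, ∏ i, f i (x i) ∂Measure.pi μ = ∏ i, ∫⁻ x, f i (x i) ∂Measure.pi μ :=
        ProbabilityTheory.lintegral_prod_eq_prod_lintegral_of_indepFun Finset.univ _ indep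
          fun i ↦ (hf i).comp (measurable_pi_apply i)
    _ = ∏ i, ∫⁻ a, f i a ∂μ i :=
        Finset.prod_congr rfl fun i _ ↦ (measurePreserving_eval μ i).lintegral_comp (hf i)

theorem lintegral_pi_succ {n : ℕ} {α : Fin (n + 1) → Type*} [∀ i, MeasurableSpace (α i)]
    (μ : ∀ i, Measure (α i)) [∀ i, SigmaFinite (μ i)] {f : (∀ i, α i) → ENNReal}
    (hf : Measurable f) :
    ∫⁻ x, f x ∂Measure.pi μ =
      ∫⁻ y, ∫⁻ a, f (Fin.cons a y) ∂μ 0 ∂Measure.pi fun i : Fin n ↦ μ i.succ := by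
  have split := (measurePreserving_piFinSuccAbove μ 0).symm
  have split_apply (a : α 0) (y : ∀ i : Fin n, α i.succ) :
      (MeasurableEquiv.piFinSuccAbove α 0).symm (a, y) = Fin.cons a y :=
    funext (Fin.cases rfl fun _ ↦ rfl)
  rw [← split.lintegral_comp hf]
  refine (lintegral_prod_symm' _ (hf.comp split.measurable)).trans ?_
  exact lintegral_congr fun y ↦ lintegral_congr fun a ↦ congrArg f (split_apply a y)

end ProductMeasure

section Rademacher

theorem lintegral_rademacher (f : ℝ → ENNReal) : ∫⁻ a, f a ∂rademacher = (f (-1) + f 1) / 2 := by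
  rw [rademacher, lintegral_add_measure, lintegral_smul_measure, lintegral_smul_measure,
    lintegral_dirac, lintegral_dirac, smul_eq_mul, smul_eq_mul, ← mul_add, one_div,
    ENNReal.div_eq_inv_mul]

theorem lintegral_exp_rademacher_le (b c : ℝ) :
    ∫⁻ a, ENNReal.ofReal (Real.exp (b * a ^ 2 + c * a)) ∂rademacher ≤
      ENNReal.ofReal (Real.exp (b + c ^ 2 / 2)) := by
  calc ∫⁻ a, ENNReal.ofReal (Real.exp (b * a ^ 2 + c * a)) ∂rademacher
      = ENNReal.ofReal (Real.exp b * Real.cosh c) := by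
        rw [lintegral_rademacher, ← ENNReal.ofReal_add (by positivity) (by positivity),
          ← ENNReal.ofReal_ofNat 2, ← ENNReal.ofReal_div_of_pos two_pos, Real.cosh_eq]
        congr 1
        simp only [neg_sq, one_pow, mul_one, mul_neg, Real.exp_add]
        ring
    _ ≤ ENNReal.ofReal (Real.exp (b + c ^ 2 / 2)) := by
        rw [Real.exp_add]
        gcongr
        exact Real.cosh_le_exp_half_sq c

end Rademacher

open scoped Matrix.Norms.Frobenius

section Frobenius

variable {m n : Type*} [Fintype m] [Fintype n]

theorem frobenius_norm_sq (M : Matrix m n ℝ) : ‖M‖ ^ 2 = ∑ i, ∑ j, M i j ^ 2 := by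
  rw [frobenius_norm_def, ← Real.sqrt_eq_rpow, Real.sq_sqrt (by positivity)]
  simp only [Real.rpow_two, Real.norm_eq_abs, sq_abs]

theorem dotProduct_self_nonneg (w : n → ℝ) : 0 ≤ w ⬝ᵥ w :=
  Finset.sum_nonneg fun i _ ↦ mul_self_nonneg (w i)

theorem frobenius_norm_vecMulVec_self (w : n → ℝ) : ‖vecMulVec w w‖ = w ⬝ᵥ w := by
  rw [← sq_eq_sq₀ (norm_nonneg _) (dotProduct_self_nonneg w), frobenius_norm_sq, sq, dotProduct,
    Finset.sum_mul_sum]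
  refine Finset.sum_congr rfl fun i _ ↦ Finset.sum_congr rfl fun j _ ↦ ?_
  rw [vecMulVec_apply]
  ring

theorem frobNorm_eq_norm {m n : ℕ} (M : Matrix (Fin m) (Fin n) ℝ) : frobNorm M = ‖M‖ := by
  rw [frobNorm, ← frobenius_norm_sq, Real.sqrt_sq (norm_nonneg M)]

end Frobenius

section EliminateFirst

variable {d : ℕ}

/-- The coefficient of `x 0` in the quadratic form `x ⬝ᵥ B *ᵥ x` is the linear form
`crossCoeff B ⬝ᵥ y` in the remaining coordinates `y`. -/
def crossCoeff (B : Matrix (Fin (d + 1)) (Fin (d + 1)) ℝ) : Fin d → ℝ :=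
  fun j ↦ B 0 j.succ + B j.succ 0

/-- The matrix left after averaging `exp (x ⬝ᵥ B *ᵥ x)` over a Rademacher first coordinate: the
first row and column of `B` are deleted, and the bound `cosh c ≤ exp (c ^ 2 / 2)` on their
contribution appears as a rank-one update. -/
noncomputable def eliminateFirst (B : Matrix (Fin (d + 1)) (Fin (d + 1)) ℝ) :
    Matrix (Fin d) (Fin d) ℝ :=
  B.submatrix Fin.succ Fin.succ + (1 / 2 : ℝ) • vecMulVec (crossCoeff B) (crossCoeff B)

variable (B : Matrix (Fin (d + 1)) (Fin (d + 1)) ℝ)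

theorem vecCons_dotProduct_mulVec_vecCons (a : ℝ) (y : Fin d → ℝ) :
    vecCons a y ⬝ᵥ B *ᵥ vecCons a y =
      (B 0 0 * a ^ 2 + crossCoeff B ⬝ᵥ y * a) + y ⬝ᵥ B.submatrix Fin.succ Fin.succ *ᵥ y := by
  simp only [dotProduct, mulVec, crossCoeff, submatrix_apply, Fin.sum_univ_succ, cons_val_zero,
    cons_val_succ, mul_add, add_mul, Finset.sum_add_distrib, Finset.mul_sum, Finset.sum_mul]
  simp only [mul_comm, mul_left_comm]
  ring

theorem dotProduct_eliminateFirst_mulVec (y : Fin d → ℝ) :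
    y ⬝ᵥ eliminateFirst B *ᵥ y =
      (crossCoeff B ⬝ᵥ y) ^ 2 / 2 + y ⬝ᵥ B.submatrix Fin.succ Fin.succ *ᵥ y := by
  rw [eliminateFirst, add_mulVec, smul_mulVec, vecMulVec_mulVec, dotProduct_add, dotProduct_smul,
    dotProduct_smul, dotProduct_comm y (crossCoeff B), op_smul_eq_smul, smul_eq_mul, smul_eq_mul]
  ring

theorem trace_eliminateFirst :
    (eliminateFirst B).trace = B.trace - B 0 0 + crossCoeff B ⬝ᵥ crossCoeff B / 2 := by
  rw [eliminateFirst, trace_add, trace_smul, trace_vecMulVec, smul_eq_mul, trace, trace,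
    Fin.sum_univ_succ]
  simp only [diag_apply, submatrix_apply]
  ring

theorem norm_submatrix_succ_sq_add_le :
    ‖B.submatrix Fin.succ Fin.succ‖ ^ 2 + crossCoeff B ⬝ᵥ crossCoeff B / 2 ≤ ‖B‖ ^ 2 := by
  have cross_le : crossCoeff B ⬝ᵥ crossCoeff B / 2 ≤
      ∑ j : Fin d, (B 0 j.succ ^ 2 + B j.succ 0 ^ 2) := by
    rw [dotProduct, Finset.sum_div]
    refine Finset.sum_le_sum fun j _ ↦ ?_
    rw [crossCoeff]
    linarith [sq_nonneg (B 0 j.succ - B j.succ 0)]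
  simp only [frobenius_norm_sq, submatrix_apply, Fin.sum_univ_succ, Finset.sum_add_distrib]
    at cross_le ⊢
  linarith [sq_nonneg (B 0 0)]

variable {B}

theorem norm_eliminateFirst_sq_add_le (hB : ‖B‖ ≤ 1 / 4) :
    ‖eliminateFirst B‖ ^ 2 + crossCoeff B ⬝ᵥ crossCoeff B / 8 ≤ ‖B‖ ^ 2 := by
  set q := crossCoeff B ⬝ᵥ crossCoeff B
  set r := ‖B.submatrix Fin.succ Fin.succ‖
  have hq₀ : 0 ≤ q := dotProduct_self_nonneg _
  have hr₀ : 0 ≤ r := norm_nonneg _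
  have hB_sq : ‖B‖ ^ 2 ≤ 1 / 16 := by
    nlinarith [norm_nonneg B]
  have block : r ^ 2 + q / 2 ≤ ‖B‖ ^ 2 := norm_submatrix_succ_sq_add_le B
  have hr_le : r ≤ 1 / 4 := by nlinarith
  have hq_le : q ≤ 1 / 8 := by linarith [sq_nonneg r]
  have triangle : ‖eliminateFirst B‖ ≤ r + q / 2 := by
    refine (norm_add_le _ _).trans_eq ?_
    rw [norm_smul, frobenius_norm_vecMulVec_self, Real.norm_of_nonneg (by norm_num)]
    ring
  calc ‖eliminateFirst B‖ ^ 2 + q / 8 ≤ (r + q / 2) ^ 2 + q / 8 := by gcongr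
    _ = r ^ 2 + r * q + q * q / 4 + q / 8 := by ring
    _ ≤ r ^ 2 + 1 / 4 * q + 1 / 8 * q / 4 + q / 8 := by gcongr
    _ ≤ ‖B‖ ^ 2 := by linarith

end EliminateFirst

section Hutchinson

instance (d n : ℕ) : IsProbabilityMeasure (radMeasure d n) := by
  unfold radMeasure
  infer_instance

variable {d n : ℕ}

theorem natCast_mul_hutch (A : Matrix (Fin d) (Fin d) ℝ) (g : Fin d → Fin n → ℝ) :
    n * hutch A g = ∑ k, flip g k ⬝ᵥ A *ᵥ flip g k := by
  rcases n.eq_zero_or_pos with rfl | hn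
  · simp
  · rw [hutch, ← mul_assoc, mul_one_div_cancel (by positivity), one_mul, Matrix.mul_assoc]
    rfl

theorem hutch_smul (t : ℝ) (A : Matrix (Fin d) (Fin d) ℝ) (g : Fin d → Fin n → ℝ) :
    hutch (t • A) g = t * hutch A g := by
  rw [hutch, hutch, Matrix.mul_smul, Matrix.smul_mul, trace_smul, smul_eq_mul, mul_left_comm]

@[fun_prop]
theorem measurable_hutch (A : Matrix (Fin d) (Fin d) ℝ) :
    Measurable fun g : Fin d → Fin n → ℝ ↦ hutch A g := by
  unfold hutch trace
  simp only [diag_apply, Matrix.mul_apply, transpose_apply, of_apply]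
  fun_prop

end Hutchinson

section MomentGeneratingFunction

variable {d n : ℕ}

@[fun_prop]
theorem measurable_dotProduct_mulVec {ι : Type*} [Fintype ι] (B : Matrix ι ι ℝ) :
    Measurable fun x : ι → ℝ ↦ x ⬝ᵥ B *ᵥ x := by
  unfold dotProduct mulVec dotProduct
  fun_prop

theorem lintegral_exp_quadForm_vecCons_le (B : Matrix (Fin (d + 1)) (Fin (d + 1)) ℝ)
    (y : Fin d → ℝ) :
    ∫⁻ a, ENNReal.ofReal (Real.exp (vecCons a y ⬝ᵥ B *ᵥ vecCons a y)) ∂rademacher ≤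
      ENNReal.ofReal (Real.exp (B 0 0)) *
        ENNReal.ofReal (Real.exp (y ⬝ᵥ eliminateFirst B *ᵥ y)) := by
  simp only [vecCons_dotProduct_mulVec_vecCons, dotProduct_eliminateFirst_mulVec,
    Real.exp_add _ (y ⬝ᵥ _), ENNReal.ofReal_mul (Real.exp_pos _).le]
  rw [lintegral_mul_const _ (by fun_prop), ← mul_assoc, ← ENNReal.ofReal_mul (Real.exp_pos _).le,
    ← Real.exp_add]
  gcongr
  exact lintegral_exp_rademacher_le _ _

theorem lintegral_exp_quadForm_le {B : Matrix (Fin d) (Fin d) ℝ} (hB : ‖B‖ ≤ 1 / 4) :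
    ∫⁻ x, ENNReal.ofReal (Real.exp (x ⬝ᵥ B *ᵥ x)) ∂(Measure.pi fun _ ↦ rademacher) ≤
      ENNReal.ofReal (Real.exp (B.trace + 4 * ‖B‖ ^ 2)) := by
  induction d with
  | zero => simp [trace, Subsingleton.elim B 0]
  | succ d ih =>
    have potential := norm_eliminateFirst_sq_add_le hB
    have hE : ‖eliminateFirst B‖ ≤ 1 / 4 :=
      ((sq_le_sq₀ (norm_nonneg _) (norm_nonneg _)).1
        (by linarith [dotProduct_self_nonneg (crossCoeff B)])).trans hB
    calc ∫⁻ x, ENNReal.ofReal (Real.exp (x ⬝ᵥ B *ᵥ x)) ∂(Measure.pi fun _ ↦ rademacher)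
        ≤ ∫⁻ y, ENNReal.ofReal (Real.exp (B 0 0)) *
            ENNReal.ofReal (Real.exp (y ⬝ᵥ eliminateFirst B *ᵥ y))
              ∂(Measure.pi fun _ ↦ rademacher) := by
          rw [lintegral_pi_succ _ (by fun_prop)]
          exact lintegral_mono fun y ↦ lintegral_exp_quadForm_vecCons_le B y
      _ ≤ ENNReal.ofReal (Real.exp (B 0 0)) * ENNReal.ofReal
            (Real.exp ((eliminateFirst B).trace + 4 * ‖eliminateFirst B‖ ^ 2)) := by
          rw [lintegral_const_mul _ (by fun_prop)]
          gcongr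
          exact ih hE
      _ ≤ ENNReal.ofReal (Real.exp (B.trace + 4 * ‖B‖ ^ 2)) := by
          rw [← ENNReal.ofReal_mul (Real.exp_pos _).le, ← Real.exp_add]
          refine ENNReal.ofReal_le_ofReal (Real.exp_le_exp.2 ?_)
          linarith [trace_eliminateFirst B]

theorem lintegral_exp_mul_hutch_le {B : Matrix (Fin d) (Fin d) ℝ} (hB : ‖B‖ ≤ 1 / 4) :
    ∫⁻ g, ENNReal.ofReal (Real.exp (n * hutch B g)) ∂radMeasure d n ≤
      ENNReal.ofReal (Real.exp (n * (B.trace + 4 * ‖B‖ ^ 2))) := by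
  have flip_law : MeasurePreserving flip (radMeasure d n) (radMeasure n d) :=
    measurePreserving_flip_pi fun _ _ ↦ rademacher
  calc ∫⁻ g, ENNReal.ofReal (Real.exp (n * hutch B g)) ∂radMeasure d n
      = ∫⁻ g, ∏ k, ENNReal.ofReal (Real.exp (flip g k ⬝ᵥ B *ᵥ flip g k)) ∂radMeasure d n := by
        simp only [natCast_mul_hutch, Real.exp_sum,
          ENNReal.ofReal_prod_of_nonneg fun _ _ ↦ (Real.exp_pos _).le]
    _ = ∫⁻ x, ∏ k, ENNReal.ofReal (Real.exp (x k ⬝ᵥ B *ᵥ x k)) ∂radMeasure n d :=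
        flip_law.lintegral_comp (f := fun x ↦ ∏ k, ENNReal.ofReal (Real.exp (x k ⬝ᵥ B *ᵥ x k)))
          (by fun_prop)
    _ = (∫⁻ x, ENNReal.ofReal (Real.exp (x ⬝ᵥ B *ᵥ x)) ∂(Measure.pi fun _ ↦ rademacher)) ^ n := by
        rw [radMeasure, lintegral_pi_prod (f := fun _ x ↦ ENNReal.ofReal (Real.exp (x ⬝ᵥ B *ᵥ x))) _
          fun _ ↦ by fun_prop, Finset.prod_const, Finset.card_univ, Fintype.card_fin]
    _ ≤ ENNReal.ofReal (Real.exp (B.trace + 4 * ‖B‖ ^ 2)) ^ n := by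
        gcongr
        exact lintegral_exp_quadForm_le hB
    _ = ENNReal.ofReal (Real.exp (n * (B.trace + 4 * ‖B‖ ^ 2))) := by
        rw [← ENNReal.ofReal_pow (Real.exp_pos _).le, ← Real.exp_nat_mul]

end MomentGeneratingFunction

section Tail

variable {d n : ℕ}

theorem radMeasure_le_hutch_le_exp {B : Matrix (Fin d) (Fin d) ℝ} (hB : ‖B‖ ≤ 1 / 4) (s : ℝ) :
    radMeasure d n {g | B.trace + s ≤ hutch B g} ≤
      ENNReal.ofReal (Real.exp (n * (4 * ‖B‖ ^ 2 - s))) := by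
  calc radMeasure d n {g | B.trace + s ≤ hutch B g}
      ≤ radMeasure d n {g | ENNReal.ofReal (Real.exp (n * (B.trace + s))) ≤
          ENNReal.ofReal (Real.exp (n * hutch B g))} :=
        measure_mono fun g (hg : B.trace + s ≤ hutch B g) ↦
          show ENNReal.ofReal _ ≤ ENNReal.ofReal _ by gcongr
    _ ≤ (∫⁻ g, ENNReal.ofReal (Real.exp (n * hutch B g)) ∂radMeasure d n) /
          ENNReal.ofReal (Real.exp (n * (B.trace + s))) :=
        meas_ge_le_lintegral_div (by fun_prop)
          (ENNReal.ofReal_pos.2 (Real.exp_pos _)).ne' ENNReal.ofReal_ne_top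
    _ ≤ ENNReal.ofReal (Real.exp (n * (B.trace + 4 * ‖B‖ ^ 2))) /
          ENNReal.ofReal (Real.exp (n * (B.trace + s))) := by
        gcongr
        exact lintegral_exp_mul_hutch_le hB
    _ = ENNReal.ofReal (Real.exp (n * (4 * ‖B‖ ^ 2 - s))) := by
        rw [← ENNReal.ofReal_div_of_pos (Real.exp_pos _), ← Real.exp_sub]
        ring_nf

theorem radMeasure_lt_hutch_sub_trace_le (A : Matrix (Fin d) (Fin d) ℝ) {ε : ℝ} (hε : 0 < ε) :
    radMeasure d n {g | ε * ‖A‖ < hutch A g - A.trace} ≤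
      ENNReal.ofReal (Real.exp (-(n * min ε (ε ^ 2) / 16))) := by
  rcases eq_or_ne A 0 with rfl | hA
  · simp [hutch]
  set m := min 1 ε with hm
  have hm_pos : 0 < m := lt_min one_pos hε
  have hA_pos : 0 < ‖A‖ := norm_pos_iff.2 hA
  set t := m / 8 / ‖A‖ with ht
  have ht_pos : 0 < t := by positivity
  have norm_smul_A : ‖t • A‖ = m / 8 := by
    rw [norm_smul, Real.norm_of_nonneg ht_pos.le, ht, div_mul_cancel₀ _ hA_pos.ne']
  have min_eq : min ε (ε ^ 2) = m * ε := by
    rw [hm, min_mul_of_nonneg _ _ hε.le, one_mul, sq]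
  calc radMeasure d n {g | ε * ‖A‖ < hutch A g - A.trace}
      ≤ radMeasure d n {g | (t • A).trace + ε * ‖t • A‖ ≤ hutch (t • A) g} := by
        refine measure_mono fun g hg ↦ ?_
        have := mul_le_mul_of_nonneg_left (le_of_lt hg) ht_pos.le
        simp only [Set.mem_ofPred_eq, hutch_smul, trace_smul, norm_smul, smul_eq_mul,
          Real.norm_of_nonneg ht_pos.le]
        linarith
    _ ≤ ENNReal.ofReal (Real.exp (n * (4 * ‖t • A‖ ^ 2 - ε * ‖t • A‖))) :=
        radMeasure_le_hutch_le_exp (by rw [norm_smul_A]; linarith [min_le_left 1 ε]) _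
    _ ≤ ENNReal.ofReal (Real.exp (-(n * min ε (ε ^ 2) / 16))) := by
        have optimum : 4 * ‖t • A‖ ^ 2 - ε * ‖t • A‖ ≤ -(min ε (ε ^ 2) / 16) := by
          rw [norm_smul_A, min_eq]
          nlinarith [min_le_right 1 ε]
        rw [mul_div_assoc, ← mul_neg]
        gcongr

theorem radMeasure_lt_abs_hutch_sub_trace_le (A : Matrix (Fin d) (Fin d) ℝ) {ε : ℝ} (hε : 0 < ε) :
    radMeasure d n {g | ε * ‖A‖ < |hutch A g - A.trace|} ≤
      ENNReal.ofReal (2 * Real.exp (-(n * min ε (ε ^ 2) / 16))) := by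
  have upper := radMeasure_lt_hutch_sub_trace_le (n := n) A hε
  have lower := radMeasure_lt_hutch_sub_trace_le (n := n) (-A) hε
  calc radMeasure d n {g | ε * ‖A‖ < |hutch A g - A.trace|}
      ≤ radMeasure d n ({g | ε * ‖A‖ < hutch A g - A.trace} ∪
          {g | ε * ‖-A‖ < hutch (-A) g - (-A).trace}) := by
        refine measure_mono fun g (hg : ε * ‖A‖ < |hutch A g - A.trace|) ↦
          (lt_abs.1 hg).imp id fun h ↦ ?_
        rw [Set.mem_ofPred_eq, norm_neg, trace_neg, ← neg_one_smul ℝ A, hutch_smul]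
        linarith
    _ ≤ ENNReal.ofReal (Real.exp (-(n * min ε (ε ^ 2) / 16))) +
          ENNReal.ofReal (Real.exp (-(n * min ε (ε ^ 2) / 16))) :=
        (measure_union_le _ _).trans (add_le_add upper lower)
    _ = ENNReal.ofReal (2 * Real.exp (-(n * min ε (ε ^ 2) / 16))) := by
        rw [← ENNReal.ofReal_add (Real.exp_pos _).le (Real.exp_pos _).le, two_mul]

end Tail

theorem two_mul_exp_neg_le_of_log_le {δ x : ℝ} (hδ : 0 < δ) (hx : Real.log (2 / δ) ≤ x) :
    2 * Real.exp (-x) ≤ δ := by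
  rw [Real.exp_neg, ← div_eq_mul_inv, div_le_comm₀ (Real.exp_pos x) hδ]
  exact (Real.log_le_iff_le_exp (by positivity)).1 hx

theorem log_two_div_le {δ : ℝ} (hδ : 0 < δ) (hδ_le : δ ≤ 1 / 2) :
    Real.log (2 / δ) ≤ 2 * Real.log (1 / δ) := by
  rw [← Nat.cast_two, ← Real.log_pow, Nat.cast_two]
  refine Real.log_le_log (by positivity) ?_
  rw [_root_.one_div_pow, div_le_div_iff₀ hδ (by positivity)]
  nlinarith

theorem log_two_div_div_min_le {δ ε : ℝ} (hδ : 0 < δ) (hδ_le : δ ≤ 1 / 2) (hε : 0 ≤ ε)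
    (hε_le : ε ≤ 1) :
    16 * Real.log (2 / δ) / min ε (ε ^ 2) ≤ 32 * Real.log (1 / δ) / ε ^ 2 := by
  rw [min_eq_right (pow_le_of_le_one hε hε_le two_ne_zero)]
  gcongr ?_ / _
  linarith [log_two_div_le hδ hδ_le]

theorem stmt5_general {d ℓ : ℕ} (A : Matrix (Fin d) (Fin d) ℝ) {δ ε : ℝ} (hδ : 0 < δ) (hε : 0 < ε)
    (hℓ : 16 * Real.log (2 / δ) / min ε (ε ^ 2) ≤ ℓ) :
    ENNReal.ofReal (1 - δ) ≤
      radMeasure d ℓ {g | |hutch A g - A.trace| ≤ ε * frobNorm A} := by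
  have hm : 0 < min ε (ε ^ 2) := by positivity
  have failure_le : 2 * Real.exp (-(ℓ * min ε (ε ^ 2) / 16)) ≤ δ :=
    two_mul_exp_neg_le_of_log_le hδ (by rw [div_le_iff₀ hm] at hℓ; linarith)
  rw [ENNReal.ofReal_sub _ hδ.le, ENNReal.ofReal_one, tsub_le_iff_right, frobNorm_eq_norm]
  calc 1 = radMeasure d ℓ Set.univ := measure_univ.symm
    _ ≤ radMeasure d ℓ {g | |hutch A g - A.trace| ≤ ε * ‖A‖} +
          radMeasure d ℓ {g | |hutch A g - A.trace| ≤ ε * ‖A‖}ᶜ := measure_univ_le_add_compl _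
    _ ≤ radMeasure d ℓ {g | |hutch A g - A.trace| ≤ ε * ‖A‖} + ENNReal.ofReal δ := by
        gcongr
        simp only [Set.compl_ofPred, not_le]
        exact (radMeasure_lt_abs_hutch_sub_trace_le A hε).trans
          (ENNReal.ofReal_le_ofReal failure_le)

theorem stmt5 : ∃ c : ℝ, 0 < c ∧
    ∀ (d : ℕ) (A : Matrix (Fin d) (Fin d) ℝ) (δ ε : ℝ) (ℓ : ℕ),
      1 ≤ d → 0 < δ → δ ≤ 1 / 2 → 0 < ε → ε < 1 →
      c * Real.log (1 / δ) / ε ^ 2 ≤ (ℓ : ℝ) →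
      ENNReal.ofReal (1 - δ) ≤
        radMeasure d ℓ {g | |hutch A g - A.trace| ≤ ε * frobNorm A} :=
  ⟨32, by norm_num, fun _ A _ _ _ _ hδ hδ_le hε hε_lt hℓ ↦
    stmt5_general A hδ hε ((log_two_div_div_min_le hδ hδ_le hε.le hε_lt.le).trans hℓ)⟩
end

section
/- Let m ≥ 18 be an integer with m ≡ 2 (mod 8), and set q = (m+2)/4 and ℓ = (m−2)/2. Let A ∈ ℝ^{d×d} be positive semidefinite. Let S ∈ ℝ^{d×q} be a random matrix with i.i.d. standard Gaussian N(0,1) entries and G ∈ ℝ^{d×ℓ} a random matrix with i.i.d. Rademacher entries, all entries jointly independent, and let ω ↦ Q(ω) ∈ ℝ^{d×q} be any measurable map such that for every outcome ω, Q(ω)ᵀQ(ω) = I_q and the column space of A·S(ω) is contained in the column space of Q(ω). Then the estimator X = tr(QᵀAQ) + (1/ℓ)·tr(Gᵀ(I − QQᵀ)A(I − QQᵀ)G) satisfies E[X] = tr(A) and Var[X] ≤ (16/(m−2)²)·tr(A)². -/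
open MeasureTheory Matrix

/-- The law of a `d × n` random matrix with i.i.d. standard Gaussian entries
(as a product measure on `Fin d → Fin n → ℝ`). -/
noncomputable def gaussMeasure (d n : ℕ) : Measure (Fin d → Fin n → ℝ) :=
  Measure.pi fun _ => Measure.pi fun _ => ProbabilityTheory.gaussianReal 0 1

/-- The Hutch++ estimator: `tr(QᵀAQ) + (1/n)·tr(gᵀ(I - QQᵀ)A(I - QQᵀ)g)`,
where `Q = Matrix.of q`. -/
noncomputable def hutchppEst {d p n : ℕ} (A : Matrix (Fin d) (Fin d) ℝ)
    (q : Fin d → Fin p → ℝ) (g : Fin d → Fin n → ℝ) : ℝ :=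
  ((Matrix.of q)ᵀ * A * Matrix.of q).trace +
    (1 / (n : ℝ)) * ((Matrix.of g)ᵀ * (1 - Matrix.of q * (Matrix.of q)ᵀ) * A *
      (1 - Matrix.of q * (Matrix.of q)ᵀ) * Matrix.of g).trace

/-!
Given `S`, the estimator is Hutchinson's estimator of `N A N` with `N = 1 - Q Qᵀ`, plus the constant
`tr (Qᵀ A Q)`. It is therefore conditionally unbiased, with conditional variance at most
`(2 / ℓ) tr ((N A N)²)`. Since `N` kills the columns of `A S`, `N A = N R` where `R` is what is left
of `A` after eliminating the columns of `S` one after the other by symmetric Gaussian elimination,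
so `tr ((N A N)²) ≤ tr (R²)`.

The expectation of `tr (R²)` is bounded with the Lyapunov function `a tr (R²) + (tr R)²`. Expanding
in an eigenbasis of `R` and bounding the eigendirections' shares of `sᵀ R s` from below by Gaussian
fourth moments shows that eliminating a Gaussian direction `s` decreases its expectation to at most
`(a - ε) tr (R²) + (tr R)²`, as long as `ε ≤ 2` and `3 ε ≤ a + 1`. Starting from `a = 2 q - 1`, all
but the last two steps can use `ε = 2`, and together the `q` steps give
`(2 q - 1) E[tr (R²)] ≤ (7 / 9) tr (A²) + (tr A)² ≤ (16 / 9) (tr A)²`.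
-/

open ProbabilityTheory

lemma dotProduct_mulVec_self {ι : Type*} [Fintype ι] (M : Matrix ι ι ℝ) (x : ι → ℝ) :
    x ⬝ᵥ M *ᵥ x = ∑ p : ι × ι, M p.1 p.2 * (x p.1 * x p.2) := by
  simp only [dotProduct, mulVec, Finset.mul_sum, Fintype.sum_prod_type, mul_left_comm]

section FourthMoments

variable {Ω ι : Type*} {mΩ : MeasurableSpace Ω} {P : Measure Ω}

/-- The random vector with coordinates `X i` has independent standardized coordinates with common
fourth moment `κ`; for instance `κ = 3` for a standard Gaussian and `κ = 1` for a Rademacher vector.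
Third moments are unconstrained: they never enter the covariance of two quadratic forms. -/
structure IsStandardizedVector (X : ι → Ω → ℝ) (κ : ℝ) (P : Measure Ω) : Prop where
  iIndepFun : iIndepFun X P
  memLp (i : ι) : MemLp (X i) 4 P
  integral_eq_zero (i : ι) : ∫ ω, X i ω ∂P = 0
  integral_sq (i : ι) : ∫ ω, X i ω ^ 2 ∂P = 1
  integral_pow_four (i : ι) : ∫ ω, X i ω ^ 4 ∂P = κ

namespace IsStandardizedVector

variable {X : ι → Ω → ℝ} {κ : ℝ}

lemma memLp_mul (hX : IsStandardizedVector X κ P) (a b : ι) :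
    MemLp (fun ω ↦ X a ω * X b ω) 2 P := by
  have : ENNReal.HolderTriple 4 4 2 := ⟨by
    rw [← two_mul, show (4 : ENNReal) = 2 * 2 by norm_num,
      ENNReal.mul_inv (by simp) (by simp), ← mul_assoc, ENNReal.mul_inv_cancel] <;> simp⟩
  exact (hX.memLp b).mul (hX.memLp a)

lemma integral_mul_mul_mul_eq_zero (hX : IsStandardizedVector X κ P) {a b c d : ι}
    (hab : a ≠ b) (hac : a ≠ c) (had : a ≠ d) :
    ∫ ω, X a ω * (X b ω * X c ω * X d ω) ∂P = 0 := by
  classical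
  have hmeas i : AEMeasurable (X i) P := (hX.memLp i).aestronglyMeasurable.aemeasurable
  have hdisj : Disjoint {a} ({b, c, d} : Finset ι) := by simp [hab, hac, had]
  have hindep : IndepFun (X a) (fun ω ↦ X b ω * X c ω * X d ω) P :=
    (hX.iIndepFun.indepFun_finset₀ _ _ hdisj hmeas).comp
      (φ := fun x : ({a} : Finset ι) → ℝ ↦ x ⟨a, by simp⟩)
      (ψ := fun x : ({b, c, d} : Finset ι) → ℝ ↦
        x ⟨b, by simp⟩ * x ⟨c, by simp⟩ * x ⟨d, by simp⟩)
      (by fun_prop) (by fun_prop)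
  rw [hindep.integral_fun_mul_eq_mul_integral (hmeas a).aestronglyMeasurable
    (((hmeas b).mul (hmeas c)).mul (hmeas d)).aestronglyMeasurable, hX.integral_eq_zero, zero_mul]

lemma integral_sq_mul_sq (hX : IsStandardizedVector X κ P) {a b : ι} (hab : a ≠ b) :
    ∫ ω, X a ω ^ 2 * X b ω ^ 2 ∂P = 1 := by
  have hmeas i : AEMeasurable (X i) P := (hX.memLp i).aestronglyMeasurable.aemeasurable
  have hindep : IndepFun (fun ω ↦ X a ω ^ 2) (fun ω ↦ X b ω ^ 2) P :=
    (hX.iIndepFun.indepFun hab).comp (measurable_id.pow_const 2) (measurable_id.pow_const 2)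
  rw [hindep.integral_fun_mul_eq_mul_integral ((hmeas a).pow_const 2).aestronglyMeasurable
    ((hmeas b).pow_const 2).aestronglyMeasurable, hX.integral_sq, hX.integral_sq, one_mul]

lemma integral_mul [DecidableEq ι] (hX : IsStandardizedVector X κ P) (a b : ι) :
    ∫ ω, X a ω * X b ω ∂P = if a = b then 1 else 0 := by
  split_ifs with hab
  · subst hab
    simpa only [← sq] using hX.integral_sq a
  · rw [(hX.iIndepFun.indepFun hab).integral_fun_mul_eq_mul_integral
      (hX.memLp a).aestronglyMeasurable (hX.memLp b).aestronglyMeasurable, hX.integral_eq_zero,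
      zero_mul]

lemma integral_mul_self_mul_mul [DecidableEq ι] (hX : IsStandardizedVector X κ P) (a c d : ι) :
    ∫ ω, X a ω * X a ω * (X c ω * X d ω) ∂P =
      if c = d then if a = c then κ else 1 else 0 := by
  split_ifs with hcd hac
  · subst hcd hac
    rw [← hX.integral_pow_four a]
    congr! 2
    ring
  · subst hcd
    simpa only [sq] using hX.integral_sq_mul_sq hac
  · by_cases hac : a = c
    · subst hac
      rw [← hX.integral_mul_mul_mul_eq_zero (Ne.symm hcd) (Ne.symm hcd) (Ne.symm hcd)]
      congr! 2
      ring
    · rw [← hX.integral_mul_mul_mul_eq_zero (Ne.symm hac) (Ne.symm hac) hcd]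
      congr! 2
      ring

lemma integral_mul_mul_mul [DecidableEq ι] (hX : IsStandardizedVector X κ P) (a b c d : ι) :
    ∫ ω, X a ω * X b ω * (X c ω * X d ω) ∂P =
      (if a = b ∧ c = d then 1 else 0) + (if a = c ∧ b = d then 1 else 0) +
        (if a = d ∧ b = c then 1 else 0) + (κ - 3) * if a = b ∧ a = c ∧ a = d then 1 else 0 := by
  have isolated {i j k l : ι} (hij : i ≠ j) (hik : i ≠ k) (hil : i ≠ l)
      (h : ∀ ω, X a ω * X b ω * (X c ω * X d ω) = X i ω * (X j ω * X k ω * X l ω)) :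
      ∫ ω, X a ω * X b ω * (X c ω * X d ω) ∂P = 0 := by
    simpa only [h] using hX.integral_mul_mul_mul_eq_zero hij hik hil
  have paired {i k l : ι} (h : ∀ ω, X a ω * X b ω * (X c ω * X d ω) =
      X i ω * X i ω * (X k ω * X l ω)) :
      ∫ ω, X a ω * X b ω * (X c ω * X d ω) ∂P = if k = l then if i = k then κ else 1 else 0 := by
    simpa only [h] using hX.integral_mul_self_mul_mul i k l
  by_cases hab : a = b
  · subst hab
    rw [hX.integral_mul_self_mul_mul]
    split_ifs <;> grind
  · by_cases hac : a = c
    · subst hac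
      rw [paired (i := a) (k := b) (l := d) fun ω ↦ by ring]
      split_ifs <;> grind
    · by_cases had : a = d
      · subst had
        rw [paired (i := a) (k := b) (l := c) fun ω ↦ by ring]
        split_ifs <;> grind
      · simpa [hab, hac, had] using isolated hab hac had fun ω ↦ by ring

lemma covariance_mul_mul [DecidableEq ι]
    (hX : IsStandardizedVector X κ P) (a b c d : ι) :
    cov[fun ω ↦ X a ω * X b ω, fun ω ↦ X c ω * X d ω; P] =
      (if a = c ∧ b = d then 1 else 0) + (if a = d ∧ b = c then 1 else 0) +
        (κ - 3) * if a = b ∧ a = c ∧ a = d then 1 else 0 := by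
  have := hX.iIndepFun.isProbabilityMeasure
  rw [covariance_eq_sub (hX.memLp_mul a b) (hX.memLp_mul c d)]
  simp only [Pi.mul_apply, hX.integral_mul_mul_mul, hX.integral_mul, ite_and]
  split_ifs <;> ring

variable [Fintype ι]

lemma memLp_quadForm (hX : IsStandardizedVector X κ P) (M : Matrix ι ι ℝ) :
    MemLp (fun ω ↦ (X · ω) ⬝ᵥ M *ᵥ (X · ω)) 2 P := by
  simp only [dotProduct_mulVec_self]
  exact memLp_finsetSum _ fun p _ ↦ (hX.memLp_mul p.1 p.2).const_mul (M p.1 p.2)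

lemma integral_quadForm (hX : IsStandardizedVector X κ P) (M : Matrix ι ι ℝ) :
    ∫ ω, (X · ω) ⬝ᵥ M *ᵥ (X · ω) ∂P = M.trace := by
  classical
  have := hX.iIndepFun.isProbabilityMeasure
  simp only [dotProduct_mulVec_self]
  rw [integral_finsetSum _ fun p _ ↦
    ((hX.memLp_mul p.1 p.2).const_mul (M p.1 p.2)).integrable one_le_two]
  simp [integral_const_mul, hX.integral_mul, Fintype.sum_prod_type, trace]

theorem covariance_quadForm (hX : IsStandardizedVector X κ P)
    (M N : Matrix ι ι ℝ) :
    cov[fun ω ↦ (X · ω) ⬝ᵥ M *ᵥ (X · ω), fun ω ↦ (X · ω) ⬝ᵥ N *ᵥ (X · ω); P] =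
      (M * Nᵀ).trace + (M * N).trace + (κ - 3) * ∑ a, M a a * N a a := by
  classical
  have := hX.iIndepFun.isProbabilityMeasure
  simp only [dotProduct_mulVec_self]
  have memLp (L : Matrix ι ι ℝ) (p : ι × ι) :
      MemLp (fun ω ↦ L p.1 p.2 * (X p.1 ω * X p.2 ω)) 2 P :=
    (hX.memLp_mul p.1 p.2).const_mul (L p.1 p.2)
  rw [covariance_fun_sum_fun_sum (memLp M) (memLp N)]
  simp only [covariance_const_mul_left, covariance_const_mul_right, hX.covariance_mul_mul]
  simp [Fintype.sum_prod_type, trace, mul_apply, mul_add, Finset.sum_add_distrib, ite_and,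
    Finset.mul_sum, mul_assoc, mul_comm, mul_left_comm]

end IsStandardizedVector

lemma isStandardizedVector_of_measurePreserving {μ : Measure ℝ} {X : ι → Ω → ℝ} {κ : ℝ}
    (hX : iIndepFun X P) (hlaw : ∀ i, MeasurePreserving (X i) P μ) (memLp : MemLp id 4 μ)
    (mean : ∫ x, x ∂μ = 0) (sq : ∫ x, x ^ 2 ∂μ = 1) (pow_four : ∫ x, x ^ 4 ∂μ = κ) :
    IsStandardizedVector X κ P where
  iIndepFun := hX
  memLp i := memLp.comp_measurePreserving (hlaw i)
  integral_eq_zero i := by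
    rw [← mean, ← (hlaw i).map_eq, integral_map (hlaw i).aemeasurable (by fun_prop)]
  integral_sq i := by
    rw [← sq, ← (hlaw i).map_eq, integral_map (hlaw i).aemeasurable (by fun_prop)]
  integral_pow_four i := by
    rw [← pow_four, ← (hlaw i).map_eq, integral_map (hlaw i).aemeasurable (by fun_prop)]

end FourthMoments

section ProductMeasures

variable {ι κ α : Type*} [Fintype ι] [Fintype κ] [MeasurableSpace α]

lemma measurePreserving_curry (μ : Measure α) [IsProbabilityMeasure μ] :
    MeasurePreserving (MeasurableEquiv.curry ι κ α) (Measure.pi fun _ ↦ μ)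
      (Measure.pi fun _ ↦ Measure.pi fun _ ↦ μ) := by
  refine ⟨(MeasurableEquiv.curry ι κ α).measurable, ?_⟩
  simpa only [Measure.infinitePi_eq_pi] using
    Measure.infinitePi_map_curry (ι := ι) (κ := κ) fun _ _ ↦ μ

lemma measurePreserving_pi_swap (μ : Measure α) [IsProbabilityMeasure μ] :
    MeasurePreserving (Function.swap : (ι → κ → α) → κ → ι → α)
      (Measure.pi fun _ ↦ Measure.pi fun _ ↦ μ) (Measure.pi fun _ ↦ Measure.pi fun _ ↦ μ) := by
  have hprod := measurePreserving_arrowCongr' (fun _ : ι × κ ↦ μ) (fun _ : κ × ι ↦ μ)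
    (Equiv.prodComm ι κ) (MeasurableEquiv.refl α) fun _ ↦ MeasurePreserving.id μ
  exact (measurePreserving_curry μ).comp (hprod.comp (measurePreserving_curry μ).symm)

end ProductMeasures

section Gaussian

lemma hasDerivAt_mul_exp_half_sq {p : ℝ → ℝ} {p' t : ℝ} (hp : HasDerivAt p p' t) :
    HasDerivAt (fun t ↦ p t * Real.exp (t ^ 2 / 2))
      ((p' + t * p t) * Real.exp (t ^ 2 / 2)) t := by
  refine (hp.fun_mul ((hasDerivAt_pow 2 t).div_const 2).exp).congr_deriv ?_
  push_cast
  ring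

lemma integral_pow_four_gaussianReal : ∫ x, x ^ 4 ∂gaussianReal 0 1 = 3 := by
  have hmgf : mgf id (gaussianReal 0 1) = fun t ↦ 1 * Real.exp (t ^ 2 / 2) := by
    simp [mgf_id_gaussianReal]
  have deriv_mul_exp (p p' : ℝ → ℝ) (hp : ∀ t, HasDerivAt p (p' t) t) :
      deriv (fun t ↦ p t * Real.exp (t ^ 2 / 2)) =
        fun t ↦ (p' t + t * p t) * Real.exp (t ^ 2 / 2) :=
    funext fun t ↦ (hasDerivAt_mul_exp_half_sq (hp t)).deriv
  have h := iteratedDeriv_mgf_zero (X := id) (μ := gaussianReal 0 1) (by simp) 4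
  simp only [hmgf, iteratedDeriv_succ, iteratedDeriv_zero] at h
  rw [deriv_mul_exp (fun _ ↦ 1) (fun _ ↦ 0) fun t ↦ hasDerivAt_const t 1,
    deriv_mul_exp _ (fun _ ↦ 1) fun t ↦ by simpa using hasDerivAt_id' t,
    deriv_mul_exp _ (fun t ↦ 2 * t) fun t ↦ by
      simpa [← sq] using (hasDerivAt_pow 2 t).const_add 1,
    deriv_mul_exp _ (fun t ↦ 2 + (1 + t ^ 2 + t * (2 * t))) fun t ↦ by
      simpa [sq] using ((hasDerivAt_id' t).const_mul 2).fun_add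
        ((hasDerivAt_id' t).fun_mul ((hasDerivAt_pow 2 t).const_add 1))] at h
  norm_num at h
  exact h.symm

/-- The law of a standard Gaussian vector, as a product measure (on `ι → ℝ` rather than on
`EuclideanSpace ℝ ι`) so that it matches the columns of `gaussMeasure`. -/
noncomputable abbrev gaussianPi (ι : Type*) [Fintype ι] : Measure (ι → ℝ) :=
  Measure.pi fun _ ↦ gaussianReal 0 1

theorem isStandardizedVector_gaussianPi {ι : Type*} [Fintype ι] :
    IsStandardizedVector (fun i (x : ι → ℝ) ↦ x i) 3 (gaussianPi ι) :=
  isStandardizedVector_of_measurePreserving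
    (iIndepFun_pi (X := fun _ ↦ id) fun _ ↦ aemeasurable_id)
    (measurePreserving_eval _) (memLp_id_gaussianReal' 4 (by simp)) integral_id_gaussianReal
    (by simpa [variance_eq_integral measurable_id.aemeasurable] using
      variance_id_gaussianReal (μ := 0) (v := 1))
    integral_pow_four_gaussianReal

end Gaussian

section Rademacher

lemma integrable_rademacher (f : ℝ → ℝ) : Integrable f rademacher :=
  .add_measure (.smul_measure (integrable_dirac (by simp)) (by simp))
    (.smul_measure (integrable_dirac (by simp)) (by simp))

lemma integral_rademacher (f : ℝ → ℝ) : ∫ x, f x ∂rademacher = (f (-1) + f 1) / 2 := by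
  have hdirac (y : ℝ) : Integrable f (((1 : ENNReal) / 2) • Measure.dirac y) :=
    .smul_measure (integrable_dirac (by simp)) (by simp)
  rw [rademacher, integral_add_measure (hdirac _) (hdirac _)]
  simp only [integral_smul_measure, integral_dirac, smul_eq_mul]
  simp
  ring

lemma iIndepFun_vec_radMeasure (d n : ℕ) :
    iIndepFun (fun p (g : Fin d → Fin n → ℝ) ↦ vec (of g) p) (radMeasure d n) := by
  have h := (iIndepFun_uncurry_infinitePi' (X := fun (_ : Fin d) (_ : Fin n) ↦ id)
    (fun _ _ ↦ rademacher) fun _ _ ↦ measurable_id).precomp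
      (Equiv.prodComm (Fin n) (Fin d)).injective
  simp only [Measure.infinitePi_eq_pi] at h
  exact h

theorem isStandardizedVector_radMeasure (d n : ℕ) :
    IsStandardizedVector (fun p (g : Fin d → Fin n → ℝ) ↦ vec (of g) p) 1 (radMeasure d n) := by
  have hlaw (p : Fin n × Fin d) :
      MeasurePreserving (fun g : Fin d → Fin n → ℝ ↦ vec (of g) p) (radMeasure d n) rademacher :=
    (measurePreserving_eval (fun _ ↦ rademacher) p.1).comp
      (measurePreserving_eval (fun _ : Fin d ↦ Measure.pi fun _ ↦ rademacher) p.2)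
  have memLp : MemLp id 4 rademacher := by
    rw [← integrable_norm_rpow_iff (by fun_prop) (by simp) (by simp)]
    exact integrable_rademacher _
  refine isStandardizedVector_of_measurePreserving (iIndepFun_vec_radMeasure d n) hlaw memLp
    ?_ ?_ ?_
  all_goals norm_num [integral_rademacher]

end Rademacher

section Hutchinson

open scoped Kronecker

lemma trace_transpose_mul_mul_eq_vec {m n R : Type*} [Fintype m] [Fintype n] [DecidableEq n]
    [CommSemiring R] (B : Matrix m m R) (g : Matrix m n R) :
    (gᵀ * B * g).trace = vec g ⬝ᵥ ((1 : Matrix n n R) ⊗ₖ B) *ᵥ vec g := by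
  rw [← vec_mul_eq_mulVec, vec_dotProduct_vec, Matrix.mul_assoc]

variable {d n : ℕ} (B : Matrix (Fin d) (Fin d) ℝ)

lemma hutch_eq_quadForm (g : Fin d → Fin n → ℝ) :
    hutch B g =
      1 / n * (vec (of g) ⬝ᵥ ((1 : Matrix (Fin n) (Fin n) ℝ) ⊗ₖ B) *ᵥ vec (of g)) := by
  rw [hutch, trace_transpose_mul_mul_eq_vec]

lemma memLp_hutch : MemLp (hutch B) 2 (radMeasure d n) := by
  simp only [funext (hutch_eq_quadForm B)]
  exact ((isStandardizedVector_radMeasure d n).memLp_quadForm _).const_mul _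

lemma integral_hutch (hn : 0 < n) : ∫ g, hutch B g ∂radMeasure d n = B.trace := by
  simp only [hutch_eq_quadForm]
  rw [integral_const_mul, (isStandardizedVector_radMeasure d n).integral_quadForm,
    trace_kronecker, trace_one, Fintype.card_fin]
  field_simp

theorem variance_hutch_le (hB : B.IsSymm) :
    Var[hutch B; radMeasure d n] ≤ 2 / n * (B * B).trace := by
  have hX := isStandardizedVector_radMeasure d n
  set M := (1 : Matrix (Fin n) (Fin n) ℝ) ⊗ₖ B with hM
  have hMsymm : Mᵀ = M := by rw [hM, ← kroneckerMap_transpose, transpose_one, hB.eq]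
  have htrace : (M * M).trace = n * (B * B).trace := by
    simp [hM, ← mul_kronecker_mul, trace_kronecker]
  have hdiag : 0 ≤ ∑ p, M p p * M p p := Finset.sum_nonneg fun p _ ↦ mul_self_nonneg _
  rw [funext (hutch_eq_quadForm B), variance_const_mul,
    ← covariance_self (hX.memLp_quadForm M).aestronglyMeasurable.aemeasurable,
    hX.covariance_quadForm]
  calc _ = (1 / n : ℝ) ^ 2 * (2 * (n * (B * B).trace) - 2 * ∑ p, M p p * M p p) := by
        rw [hMsymm, htrace]
        ring
    _ ≤ (1 / n : ℝ) ^ 2 * (2 * (n * (B * B).trace)) := by gcongr; linarith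
    _ = 2 / n * (B * B).trace := by
      rcases eq_or_ne n 0 with rfl | hn
      · simp
      · field_simp

end Hutchinson

section TotalVariance

lemma integral_sq_eq_variance_add_sq {Ω : Type*} {mΩ : MeasurableSpace Ω} {P : Measure Ω}
    [IsProbabilityMeasure P] {X : Ω → ℝ} (hX : MemLp X 2 P) :
    ∫ ω, X ω ^ 2 ∂P = Var[X; P] + (∫ ω, X ω ∂P) ^ 2 := by
  simp [variance_eq_sub hX]

variable {α β : Type*} [MeasurableSpace α] [MeasurableSpace β] {μ : Measure α} {ν : Measure β}
  [IsProbabilityMeasure μ] [IsProbabilityMeasure ν] {f : α × β → ℝ} {h : α → ℝ} {c : ℝ}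

lemma memLp_two_prod_of_variance_le (hf : AEStronglyMeasurable f (μ.prod ν))
    (hmem : ∀ a, MemLp (fun b ↦ f (a, b)) 2 ν) (hmean : ∀ a, ∫ b, f (a, b) ∂ν = c)
    (hvar : ∀ a, Var[fun b ↦ f (a, b); ν] ≤ h a) (hh : Integrable h μ) :
    MemLp f 2 (μ.prod ν) := by
  have hf_sq : AEStronglyMeasurable (fun p ↦ f p ^ 2) (μ.prod ν) := hf.pow 2
  rw [memLp_two_iff_integrable_sq hf, integrable_prod_iff hf_sq]
  refine ⟨.of_forall fun a ↦ (hmem a).integrable_sq,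
    (hh.add (integrable_const (c ^ 2))).mono' hf_sq.norm.integral_prod_right'
      (.of_forall fun a ↦ ?_)⟩
  simp only [Pi.add_apply, Real.norm_eq_abs, abs_pow, sq_abs]
  rw [integral_sq_eq_variance_add_sq (hmem a), hmean,
    abs_of_nonneg (add_nonneg (variance_nonneg _ _) (sq_nonneg c))]
  gcongr
  exact hvar a

lemma integral_prod_eq_of_forall (hf : Integrable f (μ.prod ν))
    (hmean : ∀ a, ∫ b, f (a, b) ∂ν = c) : ∫ p, f p ∂μ.prod ν = c := by
  simp [integral_prod f hf, hmean]

theorem variance_prod_le (hf : AEStronglyMeasurable f (μ.prod ν))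
    (hmem : ∀ a, MemLp (fun b ↦ f (a, b)) 2 ν) (hmean : ∀ a, ∫ b, f (a, b) ∂ν = c)
    (hvar : ∀ a, Var[fun b ↦ f (a, b); ν] ≤ h a) (hh : Integrable h μ) :
    Var[f; μ.prod ν] ≤ ∫ a, h a ∂μ := by
  have hf2 := memLp_two_prod_of_variance_le hf hmem hmean hvar hh
  have hsq : ∫ p, f p ^ 2 ∂μ.prod ν ≤ ∫ a, h a ∂μ + c ^ 2 := by
    rw [integral_prod _ hf2.integrable_sq]
    calc ∫ a, ∫ b, f (a, b) ^ 2 ∂ν ∂μ ≤ ∫ a, (h a + c ^ 2) ∂μ := by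
          refine integral_mono hf2.integrable_sq.integral_prod_left
            (hh.add (integrable_const _)) fun a ↦ ?_
          simp only [integral_sq_eq_variance_add_sq (hmem a), hmean]
          gcongr
          exact hvar a
      _ = _ := by rw [integral_add hh (integrable_const _)]; simp
  rw [integral_sq_eq_variance_add_sq hf2,
    integral_prod_eq_of_forall (hf2.integrable one_le_two) hmean] at hsq
  linarith

end TotalVariance

section PosSemidef

variable {ι : Type*} [Fintype ι] {M N : Matrix ι ι ℝ}

open scoped MatrixOrder in
lemma trace_mul_nonneg_of_posSemidef (hM : M.PosSemidef) (hN : N.PosSemidef) :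
    0 ≤ (M * N).trace := by
  classical
  obtain ⟨B, rfl⟩ := CStarAlgebra.nonneg_iff_eq_star_mul_self.mp hM.nonneg
  rw [Matrix.mul_assoc, trace_mul_comm, star_eq_conjTranspose]
  exact (hN.mul_mul_conjTranspose_same B).trace_nonneg

lemma trace_mul_self_nonneg (hM : M.PosSemidef) : 0 ≤ (M * M).trace :=
  trace_mul_nonneg_of_posSemidef hM hM

lemma trace_mul_self_le_of_posSemidef_sub (hM : M.PosSemidef) (hMN : (N - M).PosSemidef) :
    (M * M).trace ≤ (N * N).trace := by
  have h₁ := trace_mul_nonneg_of_posSemidef hM hMN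
  have h₂ := trace_mul_nonneg_of_posSemidef (by simpa using hM.add hMN) hMN
  simp only [mul_sub, trace_sub] at h₁ h₂
  rw [trace_mul_comm N M] at h₂
  linarith

open scoped MatrixOrder in
lemma trace_mul_le_of_isStarProjection (hM : M.PosSemidef) (hN : IsStarProjection N) :
    (M * N).trace ≤ M.trace := by
  classical
  have h := trace_mul_nonneg_of_posSemidef hM (nonneg_iff_posSemidef.mp hN.one_sub.nonneg)
  rwa [mul_sub, mul_one, trace_sub, sub_nonneg] at h

open scoped MatrixOrder in
lemma trace_mul_self_conj_le_of_isStarProjection (hM : M.PosSemidef)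
    (hN : IsStarProjection N) : (N * M * N * (N * M * N)).trace ≤ (M * M).trace := by
  have hMM : (M * M).PosSemidef := by
    simpa only [hM.1.eq] using posSemidef_conjTranspose_mul_self M
  have hMNM : (M * N * M).PosSemidef := by
    simpa only [hM.1.eq] using
      (nonneg_iff_posSemidef.mp hN.nonneg).conjTranspose_mul_mul_same M
  calc (N * M * N * (N * M * N)).trace = (N * N * (M * (N * N) * M)).trace := by
        rw [Matrix.mul_assoc (N * M) N, ← Matrix.mul_assoc N (N * M) N, trace_mul_comm,
          trace_mul_comm (N * N)]
        simp only [Matrix.mul_assoc, trace_mul_comm N]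
    _ = (M * N * M * N).trace := by rw [hN.isIdempotentElem.eq, trace_mul_comm]
    _ ≤ (M * N * M).trace := trace_mul_le_of_isStarProjection hMNM hN
    _ = (M * M * N).trace := trace_mul_cycle M N M
    _ ≤ (M * M).trace := trace_mul_le_of_isStarProjection hMM hN

end PosSemidef

section Spectral

variable {ι : Type*} [Fintype ι] [DecidableEq ι] {M : Matrix ι ι ℝ}

theorem pow_eq_sum_eigenvalues_smul (hM : M.IsHermitian) (k : ℕ) :
    M ^ k = ∑ i, hM.eigenvalues i ^ k •
      vecMulVec (hM.eigenvectorBasis i) (hM.eigenvectorBasis i) := by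
  conv_lhs => rw [hM.spectral_theorem, ← map_pow, diagonal_pow, Unitary.conjStarAlgAut_apply]
  ext a b
  rw [mul_apply, Matrix.sum_apply]
  simp [mul_diagonal, vecMulVec_apply, mul_assoc, mul_left_comm]

lemma eigenvectorBasis_dotProduct_self (hM : M.IsHermitian) (i : ι) :
    hM.eigenvectorBasis i ⬝ᵥ hM.eigenvectorBasis i = (1 : ℝ) :=
  hM.eigenvectorBasis.inner_eq_one i

lemma trace_pow_eq_sum_eigenvalues (hM : M.IsHermitian) (k : ℕ) :
    (M ^ k).trace = ∑ i, hM.eigenvalues i ^ k := by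
  rw [pow_eq_sum_eigenvalues_smul hM]
  simp [trace_sum, trace_vecMulVec, eigenvectorBasis_dotProduct_self]

lemma dotProduct_pow_mulVec_self_eq_sum_eigenvalues (hM : M.IsHermitian) (k : ℕ) (x : ι → ℝ) :
    x ⬝ᵥ M ^ k *ᵥ x = ∑ i, hM.eigenvalues i ^ k * (hM.eigenvectorBasis i ⬝ᵥ x) ^ 2 := by
  rw [pow_eq_sum_eigenvalues_smul hM, sum_mulVec, dotProduct_sum]
  simp [smul_mulVec, vecMulVec_mulVec, dotProduct_comm x, sq]

end Spectral

lemma trace_mul_self_le_sq_trace {ι : Type*} [Fintype ι] {M : Matrix ι ι ℝ} (hM : M.PosSemidef) :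
    (M * M).trace ≤ M.trace ^ 2 := by
  classical
  rw [← sq, trace_pow_eq_sum_eigenvalues hM.1, hM.1.trace_eq_sum_eigenvalues]
  exact Finset.sum_sq_le_sq_sum_of_nonneg fun i _ ↦ hM.eigenvalues_nonneg i

section NystromResidual

variable {ι : Type*} [Fintype ι] {R : Matrix ι ι ℝ}

/-- What is left of `R` after subtracting its rank-one Nyström approximation along `s`: for positive
semidefinite `R` this is the Schur complement of `R` in the direction `s`. If `sᵀ R s = 0` then it
is `R` itself. -/
noncomputable def nystromResidual (R : Matrix ι ι ℝ) (s : ι → ℝ) : Matrix ι ι ℝ :=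
  R - (s ⬝ᵥ R *ᵥ s)⁻¹ • vecMulVec (R *ᵥ s) (R *ᵥ s)

lemma dotProduct_mulVec_self_nonneg (hR : R.PosSemidef) (x : ι → ℝ) : 0 ≤ x ⬝ᵥ R *ᵥ x := by
  simpa using hR.dotProduct_mulVec_nonneg x

lemma mulVec_dotProduct_of_isHermitian (hR : R.IsHermitian) (x y : ι → ℝ) :
    (R *ᵥ x) ⬝ᵥ y = x ⬝ᵥ R *ᵥ y := by
  rw [dotProduct_mulVec, ← mulVec_transpose, ← conjTranspose_eq_transpose_of_trivial, hR.eq]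

theorem posSemidef_nystromResidual (hR : R.PosSemidef) (s : ι → ℝ) :
    (nystromResidual R s).PosSemidef := by
  classical
  set z := R *ᵥ s with hz
  set y := s ⬝ᵥ z with hy
  set E := y⁻¹ • vecMulVec s z with hE
  have hyy : y⁻¹ * (y⁻¹ * y) = y⁻¹ := by
    rcases eq_or_ne y 0 with h | h
    · simp [h]
    · rw [inv_mul_cancel₀ h, mul_one]
  have hRE : R * E = y⁻¹ • vecMulVec z z := by rw [hE, mul_smul_comm, mul_vecMulVec, hz]
  have hER : Eᴴ * R = y⁻¹ • vecMulVec z z := by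
    rw [← hR.1.eq, ← conjTranspose_mul, hRE]
    simp [transpose_vecMulVec]
  have hERE : y⁻¹ • vecMulVec z z * E = y⁻¹ • vecMulVec z z := by
    rw [hE, smul_mul_smul_comm, vecMulVec_mul_vecMulVec, dotProduct_comm, ← hy]
    simp [vecMulVec_smul, smul_smul, mul_assoc, hyy]
  have hconj : nystromResidual R s = (1 - E)ᴴ * R * (1 - E) := by
    rw [conjTranspose_sub, conjTranspose_one, sub_mul, one_mul, hER, mul_sub, mul_one, sub_mul,
      hRE, hERE, sub_self, sub_zero, nystromResidual]
  rw [hconj]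
  exact hR.conjTranspose_mul_mul_same _

lemma posSemidef_sub_nystromResidual (hR : R.PosSemidef) (s : ι → ℝ) :
    (R - nystromResidual R s).PosSemidef := by
  rw [nystromResidual, sub_sub_cancel]
  simpa using (posSemidef_vecMulVec_self_star (R *ᵥ s)).smul
    (inv_nonneg.mpr (dotProduct_mulVec_self_nonneg hR s))

lemma dotProduct_nystromResidual_mulVec_self (hR : R.IsHermitian) (s x : ι → ℝ) :
    x ⬝ᵥ nystromResidual R s *ᵥ x = x ⬝ᵥ R *ᵥ x - (s ⬝ᵥ R *ᵥ s)⁻¹ * (s ⬝ᵥ R *ᵥ x) ^ 2 := by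
  simp [nystromResidual, sub_mulVec, smul_mulVec, vecMulVec_mulVec, dotProduct_comm x (R *ᵥ s),
    mulVec_dotProduct_of_isHermitian hR, sq]

lemma trace_nystromResidual (hR : R.IsHermitian) (s : ι → ℝ) :
    (nystromResidual R s).trace = R.trace - (s ⬝ᵥ R *ᵥ s)⁻¹ * (s ⬝ᵥ (R * R) *ᵥ s) := by
  rw [nystromResidual, trace_sub, trace_smul, trace_vecMulVec,
    mulVec_dotProduct_of_isHermitian hR, mulVec_mulVec, smul_eq_mul]

lemma trace_nystromResidual_mul_self (hR : R.IsHermitian) (s : ι → ℝ) :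
    (nystromResidual R s * nystromResidual R s).trace =
      (R * R).trace - 2 * ((s ⬝ᵥ R *ᵥ s)⁻¹ * (s ⬝ᵥ (R * R * R) *ᵥ s)) +
        ((s ⬝ᵥ R *ᵥ s)⁻¹ * (s ⬝ᵥ (R * R) *ᵥ s)) ^ 2 := by
  set y := s ⬝ᵥ R *ᵥ s with hy
  set z := R *ᵥ s with hz
  have hzz : z ⬝ᵥ z = s ⬝ᵥ (R * R) *ᵥ s := by
    rw [hz, mulVec_dotProduct_of_isHermitian hR, mulVec_mulVec]
  have hzRz : z ⬝ᵥ R *ᵥ z = s ⬝ᵥ (R * R * R) *ᵥ s := by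
    rw [hz, mulVec_dotProduct_of_isHermitian hR, mulVec_mulVec, mulVec_mulVec, Matrix.mul_assoc]
  have hcross : (R * vecMulVec z z).trace = z ⬝ᵥ R *ᵥ z := by
    rw [mul_vecMulVec, trace_vecMulVec, dotProduct_comm]
  have hsq : (vecMulVec z z * vecMulVec z z).trace = (z ⬝ᵥ z) ^ 2 := by
    simp [vecMulVec_mul_vecMulVec, trace_vecMulVec, vecMulVec_smul, sq]
  simp only [nystromResidual, sub_mul, mul_sub, trace_sub, smul_mul_assoc, mul_smul_comm,
    trace_smul, smul_eq_mul, trace_mul_comm (vecMulVec _ _) R, ← hz, ← hy, hcross, hsq, hzz, hzRz]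
  ring

/-- The Lyapunov function of the elimination process. -/
def potential (a : ℝ) (R : Matrix ι ι ℝ) : ℝ := a * (R * R).trace + R.trace ^ 2

lemma potential_nonneg {a : ℝ} (ha : 0 ≤ a) (hR : R.PosSemidef) : 0 ≤ potential a R :=
  add_nonneg (mul_nonneg ha (trace_mul_self_nonneg hR)) (sq_nonneg _)

lemma potential_nystromResidual_le {a : ℝ} (ha : 0 ≤ a) (hR : R.PosSemidef) (s : ι → ℝ) :
    potential a (nystromResidual R s) ≤ potential a R - (s ⬝ᵥ R *ᵥ s)⁻¹ *
      ((a - 1) * (s ⬝ᵥ (R * R * R) *ᵥ s) + 2 * R.trace * (s ⬝ᵥ (R * R) *ᵥ s)) := by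
  have hy := inv_nonneg.mpr (dotProduct_mulVec_self_nonneg hR s)
  -- Cauchy-Schwarz, read off from `zᵀ R' z ≥ 0` for `z = R s` and `R'` the residual.
  have hcs : ((s ⬝ᵥ R *ᵥ s)⁻¹ * (s ⬝ᵥ (R * R) *ᵥ s)) ^ 2 ≤
      (s ⬝ᵥ R *ᵥ s)⁻¹ * (s ⬝ᵥ (R * R * R) *ᵥ s) := by
    have h := mul_nonneg hy
      (dotProduct_mulVec_self_nonneg (posSemidef_nystromResidual hR s) (R *ᵥ s))
    rw [dotProduct_nystromResidual_mulVec_self hR.1, mulVec_dotProduct_of_isHermitian hR.1] at h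
    simp only [mulVec_mulVec, ← Matrix.mul_assoc] at h
    linarith
  have := mul_le_mul_of_nonneg_left hcs (add_nonneg ha zero_le_one)
  rw [potential, potential, trace_nystromResidual hR.1, trace_nystromResidual_mul_self hR.1]
  linarith

end NystromResidual

section GaussianElimination

variable {ι : Type*} [Fintype ι] {R : Matrix ι ι ℝ}

lemma dotProduct_vecMulVec_self_mulVec (u x : ι → ℝ) :
    x ⬝ᵥ vecMulVec u u *ᵥ x = (u ⬝ᵥ x) ^ 2 := by
  simp [vecMulVec_mulVec, dotProduct_comm x, sq]

lemma memLp_sq_dotProduct_gaussianPi (u : ι → ℝ) :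
    MemLp (fun x ↦ (u ⬝ᵥ x) ^ 2) 2 (gaussianPi ι) := by
  simpa only [dotProduct_vecMulVec_self_mulVec] using
    isStandardizedVector_gaussianPi.memLp_quadForm (vecMulVec u u)

lemma integral_sq_dotProduct_gaussianPi (u : ι → ℝ) :
    ∫ x, (u ⬝ᵥ x) ^ 2 ∂gaussianPi ι = u ⬝ᵥ u := by
  simpa only [dotProduct_vecMulVec_self_mulVec, trace_vecMulVec] using
    isStandardizedVector_gaussianPi.integral_quadForm (vecMulVec u u)

lemma integral_quadForm_mul_sq_dotProduct_gaussianPi (R : Matrix ι ι ℝ) (u : ι → ℝ) :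
    ∫ x, (x ⬝ᵥ R *ᵥ x) * (u ⬝ᵥ x) ^ 2 ∂gaussianPi ι =
      R.trace * (u ⬝ᵥ u) + 2 * (u ⬝ᵥ R *ᵥ u) := by
  have hX := isStandardizedVector_gaussianPi (ι := ι)
  have h := hX.covariance_quadForm R (vecMulVec u u)
  rw [covariance_eq_sub (hX.memLp_quadForm R) (hX.memLp_quadForm _), hX.integral_quadForm,
    hX.integral_quadForm] at h
  simp only [Pi.mul_apply, dotProduct_vecMulVec_self_mulVec, transpose_vecMulVec, mul_vecMulVec,
    trace_vecMulVec, dotProduct_comm _ u, sub_self, zero_mul, add_zero] at h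
  linarith

-- The tangent line of `y ↦ y⁻¹` at `t`, weighted by `w`; `w ≤ y` covers the case `y = 0`.
lemma tangent_inv_mul_le {w y t : ℝ} (hw : 0 ≤ w) (hwy : w ≤ y) (ht : 0 < t) :
    2 / t * w - (t ^ 2)⁻¹ * (y * w) ≤ y⁻¹ * w := by
  rcases hw.eq_or_lt with rfl | hw
  · simp
  have hy := hw.trans_le hwy
  have hgap : y⁻¹ * w - (2 / t * w - (t ^ 2)⁻¹ * (y * w)) = y⁻¹ * w * (1 - y / t) ^ 2 := by
    field_simp
    ring
  rw [← sub_nonneg, hgap]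
  positivity

section EigenShare

variable [DecidableEq ι]

/-- The share of the `i`-th eigendirection of `R` in the quadratic form `sᵀ R s`, or `0` if it
vanishes. -/
noncomputable def eigenShare (hR : R.IsHermitian) (i : ι) (s : ι → ℝ) : ℝ :=
  (s ⬝ᵥ R *ᵥ s)⁻¹ * (hR.eigenvalues i * (hR.eigenvectorBasis i ⬝ᵥ s) ^ 2)

lemma quadForm_eq_sum_eigenvalues (hR : R.IsHermitian) (s : ι → ℝ) :
    s ⬝ᵥ R *ᵥ s = ∑ i, hR.eigenvalues i * (hR.eigenvectorBasis i ⬝ᵥ s) ^ 2 := by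
  simpa using dotProduct_pow_mulVec_self_eq_sum_eigenvalues hR 1 s

lemma eigenvalue_mul_sq_nonneg (hR : R.PosSemidef) (i : ι) (s : ι → ℝ) :
    0 ≤ hR.1.eigenvalues i * (hR.1.eigenvectorBasis i ⬝ᵥ s) ^ 2 :=
  mul_nonneg (hR.eigenvalues_nonneg i) (sq_nonneg _)

lemma eigenvalue_mul_sq_le_quadForm (hR : R.PosSemidef) (i : ι) (s : ι → ℝ) :
    hR.1.eigenvalues i * (hR.1.eigenvectorBasis i ⬝ᵥ s) ^ 2 ≤ s ⬝ᵥ R *ᵥ s := by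
  rw [quadForm_eq_sum_eigenvalues hR.1]
  exact Finset.single_le_sum (fun j _ ↦ eigenvalue_mul_sq_nonneg hR j s) (Finset.mem_univ i)

lemma eigenvalue_le_trace (hR : R.PosSemidef) (i : ι) : hR.1.eigenvalues i ≤ R.trace := by
  rw [hR.1.trace_eq_sum_eigenvalues]
  exact Finset.single_le_sum (fun j _ ↦ hR.eigenvalues_nonneg j) (Finset.mem_univ i)

lemma integrable_eigenShare (hR : R.PosSemidef) (i : ι) :
    Integrable (eigenShare hR.1 i) (gaussianPi ι) := by
  have hmeas : Measurable (eigenShare hR.1 i) := by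
    unfold eigenShare
    simp only [dotProduct, mulVec]
    fun_prop
  refine .of_bound hmeas.aestronglyMeasurable 1 (.of_forall fun s ↦ ?_)
  have hy := dotProduct_mulVec_self_nonneg hR s
  have hw := eigenvalue_mul_sq_nonneg hR i s
  rw [eigenShare, Real.norm_of_nonneg (mul_nonneg (inv_nonneg.mpr hy) hw)]
  exact inv_mul_le_one_of_le₀ (eigenvalue_mul_sq_le_quadForm hR i s) hy

lemma le_integral_eigenShare (hR : R.PosSemidef) (i : ι) :
    hR.1.eigenvalues i / (R.trace + 2 * hR.1.eigenvalues i) ≤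
      ∫ s, eigenShare hR.1 i s ∂gaussianPi ι := by
  set l := hR.1.eigenvalues i with hl
  set u := hR.1.eigenvectorBasis i with hu
  -- The mean of `sᵀ R s` weighted by `(u ⬝ᵥ s) ^ 2`, hence the best point for the tangent bound.
  set t := R.trace + 2 * l with ht
  have huu : u ⬝ᵥ u = (1 : ℝ) := eigenvectorBasis_dotProduct_self hR.1 i
  have huRu : u ⬝ᵥ R *ᵥ u = l := by
    rw [hu, hR.1.mulVec_eigenvectorBasis, dotProduct_smul, ← hu, huu, smul_eq_mul, mul_one]
  rcases (hR.eigenvalues_nonneg i).eq_or_lt with hl0 | hlpos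
  · simp [eigenShare, hl, ← hl0]
  have htpos : 0 < t := by linarith [eigenvalue_le_trace hR i]
  have hX := isStandardizedVector_gaussianPi (ι := ι)
  have hint₂ : Integrable (fun s ↦ 2 / t * (l * (u ⬝ᵥ s) ^ 2)) (gaussianPi ι) :=
    (((memLp_sq_dotProduct_gaussianPi u).integrable one_le_two).const_mul l).const_mul _
  have hint₄ : Integrable (fun s ↦ (t ^ 2)⁻¹ * ((s ⬝ᵥ R *ᵥ s) * (l * (u ⬝ᵥ s) ^ 2)))
      (gaussianPi ι) :=
    ((hX.memLp_quadForm R).integrable_mul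
      ((memLp_sq_dotProduct_gaussianPi u).const_mul l)).const_mul _
  calc l / t = 2 / t * (l * 1) - (t ^ 2)⁻¹ * (l * t) := by field_simp; norm_num
    _ = ∫ s, (2 / t * (l * (u ⬝ᵥ s) ^ 2) -
          (t ^ 2)⁻¹ * ((s ⬝ᵥ R *ᵥ s) * (l * (u ⬝ᵥ s) ^ 2))) ∂gaussianPi ι := by
        rw [integral_sub hint₂ hint₄]
        simp only [mul_left_comm _ l, integral_const_mul, integral_sq_dotProduct_gaussianPi,
          integral_quadForm_mul_sq_dotProduct_gaussianPi, huu, huRu, mul_one, ht]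
        ring
    _ ≤ ∫ s, eigenShare hR.1 i s ∂gaussianPi ι :=
        integral_mono (hint₂.sub hint₄) (integrable_eigenShare hR i) fun s ↦
          tangent_inv_mul_le (eigenvalue_mul_sq_nonneg hR i s)
            (eigenvalue_mul_sq_le_quadForm hR i s) htpos

lemma potential_nystromResidual_le_sub_sum_eigenShare {a : ℝ} (ha : 0 ≤ a) (hR : R.PosSemidef)
    (s : ι → ℝ) :
    potential a (nystromResidual R s) ≤ potential a R - ∑ i,
      ((a - 1) * hR.1.eigenvalues i + 2 * R.trace) * hR.1.eigenvalues i * eigenShare hR.1 i s := by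
  refine (potential_nystromResidual_le ha hR s).trans_eq ?_
  have h₂ := dotProduct_pow_mulVec_self_eq_sum_eigenvalues hR.1 2 s
  have h₃ := dotProduct_pow_mulVec_self_eq_sum_eigenvalues hR.1 3 s
  rw [pow_succ, pow_two] at h₃
  rw [pow_two] at h₂
  rw [h₂, h₃, Finset.mul_sum, Finset.mul_sum, ← Finset.sum_add_distrib, Finset.mul_sum]
  congr! 2 with i
  rw [eigenShare]
  ring

lemma mul_sq_eigenvalue_le_mul_integral_eigenShare {a ε : ℝ} (hε : ε ≤ 2) (hεa : 3 * ε ≤ a + 1)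
    (ha : 0 ≤ a) (hR : R.PosSemidef) (i : ι) :
    ε * hR.1.eigenvalues i ^ 2 ≤ ((a - 1) * hR.1.eigenvalues i + 2 * R.trace) *
      hR.1.eigenvalues i * ∫ s, eigenShare hR.1 i s ∂gaussianPi ι := by
  have hlT := eigenvalue_le_trace hR i
  have hshare := le_integral_eigenShare hR i
  have hl := hR.eigenvalues_nonneg i
  generalize hR.1.eigenvalues i = l at hl hlT hshare ⊢
  rcases hl.eq_or_lt with rfl | hlpos
  · simp
  have hc : 0 ≤ (a - 1) * l + 2 * R.trace := by nlinarith
  have ht : 0 < R.trace + 2 * l := by linarith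
  have hεc : ε * (R.trace + 2 * l) ≤ (a - 1) * l + 2 * R.trace := by nlinarith
  calc ε * l ^ 2 = ε * (R.trace + 2 * l) * l * (l / (R.trace + 2 * l)) := by
        rw [mul_div_assoc', eq_div_iff ht.ne']
        ring
    _ ≤ ((a - 1) * l + 2 * R.trace) * l * (l / (R.trace + 2 * l)) := by gcongr
    _ ≤ _ := by gcongr

end EigenShare

theorem integral_potential_nystromResidual_le {a ε : ℝ} (ha : 0 ≤ a) (hε : ε ≤ 2)
    (hεa : 3 * ε ≤ a + 1) (hR : R.PosSemidef) :
    ∫ s, potential a (nystromResidual R s) ∂gaussianPi ι ≤ potential (a - ε) R := by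
  classical
  set l := hR.1.eigenvalues
  have hint (i : ι) : Integrable
      (fun s ↦ ((a - 1) * l i + 2 * R.trace) * l i * eigenShare hR.1 i s) (gaussianPi ι) :=
    (integrable_eigenShare hR i).const_mul _
  calc ∫ s, potential a (nystromResidual R s) ∂gaussianPi ι
      ≤ ∫ s, (potential a R - ∑ i, ((a - 1) * l i + 2 * R.trace) * l i * eigenShare hR.1 i s)
          ∂gaussianPi ι :=
        integral_mono_of_nonneg
          (.of_forall fun s ↦ potential_nonneg ha (posSemidef_nystromResidual hR s))
          ((integrable_const _).sub (integrable_finsetSum _ fun i _ ↦ hint i))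
          (.of_forall (potential_nystromResidual_le_sub_sum_eigenShare ha hR))
    _ = potential a R -
          ∑ i, ((a - 1) * l i + 2 * R.trace) * l i * ∫ s, eigenShare hR.1 i s ∂gaussianPi ι := by
        rw [integral_sub (integrable_const _) (integrable_finsetSum _ fun i _ ↦ hint i),
          integral_finsetSum _ fun i _ ↦ hint i]
        simp [integral_const_mul]
    _ ≤ potential a R - ∑ i, ε * l i ^ 2 :=
        sub_le_sub_left (Finset.sum_le_sum fun i _ ↦
          mul_sq_eigenvalue_le_mul_integral_eigenShare hε hεa ha hR i) _
    _ = potential (a - ε) R := by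
        rw [← Finset.mul_sum, ← trace_pow_eq_sum_eigenvalues hR.1, potential, potential, sq R]
        ring

end GaussianElimination

section IteratedResidual

variable {ι : Type*} [Fintype ι] {R : Matrix ι ι ℝ}

/-- The residual of `R` after eliminating the directions `s 0, s 1, …` one after the other. -/
noncomputable def iteratedResidual :
    (n : ℕ) → Matrix ι ι ℝ → (Fin n → ι → ℝ) → Matrix ι ι ℝ
  | 0, R, _ => R
  | n + 1, R, s => iteratedResidual n (nystromResidual R (s 0)) (Fin.tail s)

lemma posSemidef_iteratedResidual (hR : R.PosSemidef) {n : ℕ} (s : Fin n → ι → ℝ) :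
    (iteratedResidual n R s).PosSemidef := by
  induction n generalizing R with
  | zero => exact hR
  | succ n ih => exact ih (posSemidef_nystromResidual hR _) _

lemma trace_nystromResidual_mul_self_le (hR : R.PosSemidef) (s : ι → ℝ) :
    (nystromResidual R s * nystromResidual R s).trace ≤ (R * R).trace :=
  trace_mul_self_le_of_posSemidef_sub (posSemidef_nystromResidual hR s)
    (posSemidef_sub_nystromResidual hR s)

lemma trace_iteratedResidual_mul_self_le (hR : R.PosSemidef) {n : ℕ} (s : Fin n → ι → ℝ) :
    (iteratedResidual n R s * iteratedResidual n R s).trace ≤ (R * R).trace := by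
  induction n generalizing R with
  | zero => exact le_rfl
  | succ n ih =>
    exact (ih (posSemidef_nystromResidual hR _) _).trans (trace_nystromResidual_mul_self_le hR _)

lemma mul_iteratedResidual_eq {κ : Type*} (N : Matrix κ ι ℝ) {n : ℕ} {s : Fin n → ι → ℝ}
    (hs : ∀ j, (N * R) *ᵥ s j = 0) : N * iteratedResidual n R s = N * R := by
  induction n generalizing R with
  | zero => rfl
  | succ n ih =>
    have h₀ : N * nystromResidual R (s 0) = N * R := by
      rw [nystromResidual, Matrix.mul_sub, Matrix.mul_smul, mul_vecMulVec, mulVec_mulVec, hs 0]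
      simp
    rw [iteratedResidual, ih (by rw [h₀]; exact fun j ↦ hs j.succ), h₀]

section Measurability

variable {α : Type*} [MeasurableSpace α] {f : α → Matrix ι ι ℝ}

lemma measurable_nystromResidual_apply {s : α → ι → ℝ} (hf : ∀ i j, Measurable fun a ↦ f a i j)
    (hs : Measurable s) (i j : ι) : Measurable fun a ↦ nystromResidual (f a) (s a) i j := by
  simp only [nystromResidual, Matrix.sub_apply, Matrix.smul_apply, vecMulVec_apply, mulVec,
    dotProduct, smul_eq_mul]
  fun_prop

lemma measurable_iteratedResidual_apply {n : ℕ} {s : α → Fin n → ι → ℝ}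
    (hf : ∀ i j, Measurable fun a ↦ f a i j) (hs : Measurable s) (i j : ι) :
    Measurable fun a ↦ iteratedResidual n (f a) (s a) i j := by
  induction n generalizing f with
  | zero => exact hf i j
  | succ n ih =>
    exact ih (measurable_nystromResidual_apply hf (by fun_prop)) (by unfold Fin.tail; fun_prop)

lemma measurable_trace_mul_self (hf : ∀ i j, Measurable fun a ↦ f a i j) :
    Measurable fun a ↦ (f a * f a).trace := by
  simp only [trace, diag, mul_apply]
  fun_prop

end Measurability

lemma integrable_potential_nystromResidual {a : ℝ} (ha : 0 ≤ a) (hR : R.PosSemidef) :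
    Integrable (fun s ↦ potential a (nystromResidual R s)) (gaussianPi ι) := by
  have hmeas := measurable_nystromResidual_apply (f := fun _ ↦ R) (fun _ _ ↦ measurable_const)
    (measurable_id (α := ι → ℝ))
  have htrace : Measurable fun s ↦ (nystromResidual R s).trace :=
    Finset.measurable_sum _ fun i _ ↦ hmeas i i
  refine .of_bound (((measurable_trace_mul_self hmeas).const_mul a).add
    (htrace.pow_const 2)).aestronglyMeasurable (potential a R) (.of_forall fun s ↦ ?_)
  have hpos := posSemidef_nystromResidual hR s
  rw [Real.norm_of_nonneg (potential_nonneg ha hpos)]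
  have htrace_le : (nystromResidual R s).trace ≤ R.trace := by
    simpa using (posSemidef_sub_nystromResidual hR s).trace_nonneg
  exact add_le_add (mul_le_mul_of_nonneg_left (trace_nystromResidual_mul_self_le hR s) ha)
    (pow_le_pow_left₀ hpos.trace_nonneg htrace_le 2)

/-- The expected squared Frobenius norm of the residual after eliminating `n` independent Gaussian
directions. -/
noncomputable def meanSqResidual (n : ℕ) (R : Matrix ι ι ℝ) : ℝ :=
  ∫ s : Fin n → ι → ℝ, (iteratedResidual n R s * iteratedResidual n R s).trace
    ∂Measure.pi fun _ ↦ gaussianPi ι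

lemma meanSqResidual_zero (R : Matrix ι ι ℝ) : meanSqResidual 0 R = (R * R).trace := by
  simp [meanSqResidual, iteratedResidual]

lemma integrable_trace_iteratedResidual_mul_self (hR : R.PosSemidef) (n : ℕ) :
    Integrable (fun s ↦ (iteratedResidual n R s * iteratedResidual n R s).trace)
      (Measure.pi fun _ ↦ gaussianPi ι) := by
  have hmeas := measurable_iteratedResidual_apply (f := fun _ ↦ R) (fun _ _ ↦ measurable_const)
    (measurable_id (α := Fin n → ι → ℝ))
  refine .of_bound (measurable_trace_mul_self hmeas).aestronglyMeasurable (R * R).trace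
    (.of_forall fun s ↦ ?_)
  rw [Real.norm_of_nonneg (trace_mul_self_nonneg (posSemidef_iteratedResidual hR s))]
  exact trace_iteratedResidual_mul_self_le hR s

lemma measurePreserving_piFinSuccAbove_symm {α : Type*} [MeasurableSpace α] (μ : Measure α)
    [SigmaFinite μ] (n : ℕ) :
    MeasurePreserving (MeasurableEquiv.piFinSuccAbove (fun _ : Fin (n + 1) ↦ α) 0).symm
      (μ.prod (Measure.pi fun _ ↦ μ)) (Measure.pi fun _ ↦ μ) :=
  (measurePreserving_piFinSuccAbove (fun _ ↦ μ) 0).symm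

lemma integrable_trace_iteratedResidual_succ_mul_self (hR : R.PosSemidef) (n : ℕ) :
    Integrable (fun p : (ι → ℝ) × (Fin n → ι → ℝ) ↦
      (iteratedResidual n (nystromResidual R p.1) p.2 *
        iteratedResidual n (nystromResidual R p.1) p.2).trace)
      ((gaussianPi ι).prod (Measure.pi fun _ ↦ gaussianPi ι)) :=
  (measurePreserving_piFinSuccAbove_symm (gaussianPi ι) n).integrable_comp_of_integrable
    (integrable_trace_iteratedResidual_mul_self hR (n + 1))

lemma integrable_meanSqResidual_nystromResidual (hR : R.PosSemidef) (n : ℕ) :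
    Integrable (fun s ↦ meanSqResidual n (nystromResidual R s)) (gaussianPi ι) :=
  (integrable_trace_iteratedResidual_succ_mul_self hR n).integral_prod_left

lemma meanSqResidual_succ (hR : R.PosSemidef) (n : ℕ) :
    meanSqResidual (n + 1) R = ∫ s, meanSqResidual n (nystromResidual R s) ∂gaussianPi ι := by
  rw [meanSqResidual, ← (measurePreserving_piFinSuccAbove_symm (gaussianPi ι) n).integral_comp']
  exact integral_prod _ (integrable_trace_iteratedResidual_succ_mul_self hR n)

lemma mul_meanSqResidual_succ_le {n : ℕ} {c a ε : ℝ}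
    (h : ∀ {R : Matrix ι ι ℝ}, R.PosSemidef → c * meanSqResidual n R ≤ potential a R)
    (ha : 0 ≤ a) (hε : ε ≤ 2) (hεa : 3 * ε ≤ a + 1) (hR : R.PosSemidef) :
    c * meanSqResidual (n + 1) R ≤ potential (a - ε) R := by
  calc c * meanSqResidual (n + 1) R
      = ∫ s, c * meanSqResidual n (nystromResidual R s) ∂gaussianPi ι := by
        rw [meanSqResidual_succ hR, integral_const_mul]
    _ ≤ ∫ s, potential a (nystromResidual R s) ∂gaussianPi ι :=
        integral_mono ((integrable_meanSqResidual_nystromResidual hR n).const_mul c)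
          (integrable_potential_nystromResidual ha hR) fun s ↦ h (posSemidef_nystromResidual hR s)
    _ ≤ potential (a - ε) R := integral_potential_nystromResidual_le ha hε hεa hR

lemma mul_meanSqResidual_le_potential {n : ℕ} {a : ℝ} (ha : 2 * n + 3 ≤ a) (hR : R.PosSemidef) :
    a * meanSqResidual n R ≤ potential (a - 2 * n) R := by
  induction n generalizing R with
  | zero => simpa [meanSqResidual_zero, potential] using sq_nonneg R.trace
  | succ n ih =>
    push_cast at ha ⊢
    convert mul_meanSqResidual_succ_le (ih (by linarith)) (ε := 2) (by linarith) le_rfl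
      (by linarith) hR using 2
    ring

theorem meanSqResidual_le {q : ℕ} (hq : 2 ≤ q) (hR : R.PosSemidef) :
    meanSqResidual q R ≤ R.trace ^ 2 / (q - 1) := by
  classical
  obtain ⟨n, rfl⟩ := Nat.exists_eq_add_of_le' hq
  -- Up to here every step can spend the full weight `2`; the last two steps start from weights
  -- `3` and `5 / 3`, where only `(a + 1) / 3` is allowed.
  have h₃ {R : Matrix ι ι ℝ} (hR : R.PosSemidef) :
      (2 * n + 3) * meanSqResidual n R ≤ potential 3 R := by
    simpa using mul_meanSqResidual_le_potential le_rfl hR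
  have h₅ {R : Matrix ι ι ℝ} (hR : R.PosSemidef) :=
    mul_meanSqResidual_succ_le h₃ (ε := 4 / 3) (by norm_num) (by norm_num) (by norm_num) hR
  have h₇ :=
    mul_meanSqResidual_succ_le h₅ (ε := 8 / 9) (by norm_num) (by norm_num) (by norm_num) hR
  have hle := trace_mul_self_le_sq_trace hR
  rw [potential] at h₇
  push_cast
  rw [le_div_iff₀ (by linarith)]
  have : 0 ≤ meanSqResidual (n + 2) R :=
    integral_nonneg fun s ↦ trace_mul_self_nonneg (posSemidef_iteratedResidual hR s)
  nlinarith

end IteratedResidual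

section Compression

variable {m n R : Type*} [Fintype m] [Fintype n] [DecidableEq n] [CommRing R]
  {U : Matrix m n R} {V : Matrix n m R}

lemma isIdempotentElem_mul_of_mul_eq_one (hVU : V * U = 1) : IsIdempotentElem (U * V) := by
  rw [IsIdempotentElem, Matrix.mul_assoc, ← Matrix.mul_assoc V, hVU, Matrix.one_mul]

lemma isStarProjection_mul_transpose {U : Matrix m n ℝ} (hU : Uᵀ * U = 1) :
    IsStarProjection (U * Uᵀ) where
  isIdempotentElem := isIdempotentElem_mul_of_mul_eq_one hU
  isSelfAdjoint := by simp [isSelfAdjoint_iff, star_eq_conjTranspose]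

variable [DecidableEq m]

lemma one_sub_mul_mulVec_eq_zero (hVU : V * U = 1) {x : m → R}
    (hx : x ∈ LinearMap.range U.mulVecLin) : (1 - U * V) *ᵥ x = 0 := by
  obtain ⟨y, rfl⟩ := hx
  rw [mulVecLin_apply, mulVec_mulVec, Matrix.sub_mul, Matrix.mul_assoc, hVU, Matrix.one_mul,
    Matrix.mul_one, sub_self, zero_mulVec]

lemma trace_mul_mul_add_trace_one_sub_conj (hVU : V * U = 1) (A : Matrix m m R) :
    (V * A * U).trace + ((1 - U * V) * A * (1 - U * V)).trace = A.trace := by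
  rw [trace_mul_comm _ (1 - U * V), ← Matrix.mul_assoc,
    (isIdempotentElem_mul_of_mul_eq_one hVU).one_sub.eq, Matrix.sub_mul, trace_sub,
    Matrix.one_mul, trace_mul_comm (V * A), ← Matrix.mul_assoc, add_sub_cancel]

end Compression

section HutchPlusPlus

instance inst_s9 (d n : ℕ) : IsProbabilityMeasure (radMeasure d n) :=
  inferInstanceAs (IsProbabilityMeasure (Measure.pi _))

instance (d n : ℕ) : IsProbabilityMeasure (gaussMeasure d n) :=
  inferInstanceAs (IsProbabilityMeasure (Measure.pi _))

variable {d q ℓ : ℕ} {A : Matrix (Fin d) (Fin d) ℝ}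

lemma measurable_hutchppEst {α : Type*} [MeasurableSpace α] (A : Matrix (Fin d) (Fin d) ℝ)
    {Q : α → Fin d → Fin q → ℝ} {G : α → Fin d → Fin ℓ → ℝ} (hQ : Measurable Q)
    (hG : Measurable G) : Measurable fun ω ↦ hutchppEst A (Q ω) (G ω) := by
  simp only [hutchppEst, trace, diag, mul_apply, transpose_apply, of_apply, Matrix.sub_apply]
  fun_prop

section Conditional

variable {U : Fin d → Fin q → ℝ}

lemma hutchppEst_eq_add_hutch (A : Matrix (Fin d) (Fin d) ℝ) (U : Fin d → Fin q → ℝ)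
    (g : Fin d → Fin ℓ → ℝ) :
    hutchppEst A U g = ((of U)ᵀ * A * of U).trace +
      hutch ((1 - of U * (of U)ᵀ) * A * (1 - of U * (of U)ᵀ)) g := by
  simp only [hutchppEst, hutch, Matrix.mul_assoc]

lemma memLp_hutchppEst (A : Matrix (Fin d) (Fin d) ℝ) (U : Fin d → Fin q → ℝ) :
    MemLp (hutchppEst A U) 2 (radMeasure d ℓ) := by
  rw [funext (hutchppEst_eq_add_hutch A U)]
  exact (memLp_const ((of U)ᵀ * A * of U).trace).add (memLp_hutch _)

lemma integral_hutchppEst (hℓ : 0 < ℓ) (A : Matrix (Fin d) (Fin d) ℝ)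
    (hU : (of U)ᵀ * of U = 1) : ∫ g, hutchppEst A U g ∂radMeasure d ℓ = A.trace := by
  simp only [hutchppEst_eq_add_hutch]
  rw [integral_add (integrable_const _) ((memLp_hutch _).integrable one_le_two),
    integral_hutch _ hℓ, integral_const, probReal_univ, one_smul,
    trace_mul_mul_add_trace_one_sub_conj hU]

lemma variance_hutchppEst_le (hA : A.PosSemidef) (hU : (of U)ᵀ * of U = 1)
    {p : ℕ} {S : Fin d → Fin p → ℝ}
    (hspan : LinearMap.range (A * of S).mulVecLin ≤ LinearMap.range (of U).mulVecLin) :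
    Var[hutchppEst A U; radMeasure d ℓ] ≤
      2 / ℓ * (iteratedResidual p A (Function.swap S) *
        iteratedResidual p A (Function.swap S)).trace := by
  set N := 1 - of U * (of U)ᵀ with hN
  set R := iteratedResidual p A (Function.swap S)
  have hNproj : IsStarProjection N := (isStarProjection_mul_transpose hU).one_sub
  have hNR : N * A = N * R := by
    refine (mul_iteratedResidual_eq N fun j ↦ ?_).symm
    rw [← mulVec_mulVec]
    refine one_sub_mul_mulVec_eq_zero hU (hspan ⟨Pi.single j 1, ?_⟩)
    rw [mulVecLin_apply, ← mulVec_mulVec, mulVec_single_one]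
    rfl
  have hRpos : R.PosSemidef := posSemidef_iteratedResidual hA _
  have hNsymm : Nᵀ = N := by simp [hN]
  have hsymm : (N * R * N).IsSymm := by
    rw [IsSymm, transpose_mul, transpose_mul, hNsymm,
      ← conjTranspose_eq_transpose_of_trivial R, hRpos.isHermitian.eq, Matrix.mul_assoc]
  rw [funext (hutchppEst_eq_add_hutch A U),
    variance_const_add (memLp_hutch _).aestronglyMeasurable, ← hN, hNR]
  refine (variance_hutch_le _ hsymm).trans ?_
  gcongr
  exact trace_mul_self_conj_le_of_isStarProjection hRpos hNproj

end Conditional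

lemma measurePreserving_swap_gaussMeasure (d q : ℕ) :
    MeasurePreserving (Function.swap : (Fin d → Fin q → ℝ) → Fin q → Fin d → ℝ)
      (gaussMeasure d q) (Measure.pi fun _ ↦ gaussianPi (Fin d)) :=
  measurePreserving_pi_swap (gaussianReal 0 1)

theorem stmt9_general (hq : 2 ≤ q) (hℓ : 0 < ℓ) (hA : A.PosSemidef)
    {Q : (Fin d → Fin q → ℝ) → Fin d → Fin q → ℝ} (hQmeas : Measurable Q)
    (hQorth : ∀ s, (of (Q s))ᵀ * of (Q s) = 1)
    (hQspan : ∀ s, LinearMap.range (A * of s).mulVecLin ≤ LinearMap.range (of (Q s)).mulVecLin) :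
    ∫ ω, hutchppEst A (Q ω.1) ω.2 ∂(gaussMeasure d q).prod (radMeasure d ℓ) = A.trace ∧
      Var[fun ω ↦ hutchppEst A (Q ω.1) ω.2; (gaussMeasure d q).prod (radMeasure d ℓ)] ≤
        2 / (ℓ * (q - 1)) * A.trace ^ 2 := by
  have hmeas := (measurable_hutchppEst (ℓ := ℓ) A (hQmeas.comp measurable_fst)
    measurable_snd).aestronglyMeasurable (μ := (gaussMeasure d q).prod (radMeasure d ℓ))
  have hmem s := memLp_hutchppEst (ℓ := ℓ) A (Q s)
  have hmean s := integral_hutchppEst hℓ A (hQorth s)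
  have hvar s := variance_hutchppEst_le (ℓ := ℓ) hA (hQorth s) (hQspan s)
  have hswap := measurePreserving_swap_gaussMeasure d q
  have hR := integrable_trace_iteratedResidual_mul_self hA q
  have hint := (hswap.integrable_comp_of_integrable hR).const_mul (2 / ℓ : ℝ)
  refine ⟨integral_prod_eq_of_forall
    ((memLp_two_prod_of_variance_le hmeas hmem hmean hvar hint).integrable one_le_two) hmean, ?_⟩
  refine (variance_prod_le hmeas hmem hmean hvar hint).trans ?_
  calc _ = 2 / ℓ * meanSqResidual q A := by
        rw [integral_const_mul, meanSqResidual, ← hswap.map_eq,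
          integral_map hswap.aemeasurable (hswap.map_eq ▸ hR.aestronglyMeasurable)]
    _ ≤ 2 / ℓ * (A.trace ^ 2 / (q - 1)) := by
        gcongr
        exact meanSqResidual_le hq hA
    _ = 2 / (ℓ * (q - 1)) * A.trace ^ 2 := by rw [div_mul_div_comm, div_mul_eq_mul_div]

end HutchPlusPlus

theorem stmt9 (m d q ℓ : ℕ) (hm : 18 ≤ m) (hmod : m % 8 = 2)
    (hq : 4 * q = m + 2) (hl : 2 * ℓ = m - 2)
    (A : Matrix (Fin d) (Fin d) ℝ) (hA : A.PosSemidef)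
    (Q : (Fin d → Fin q → ℝ) → (Fin d → Fin q → ℝ))
    (hQmeas : Measurable Q)
    (hQorth : ∀ s, (Matrix.of (Q s))ᵀ * Matrix.of (Q s) = 1)
    (hQspan : ∀ s, LinearMap.range (A * Matrix.of s).mulVecLin ≤
      LinearMap.range (Matrix.of (Q s)).mulVecLin) :
    (∫ ω, hutchppEst A (Q ω.1) ω.2 ∂((gaussMeasure d q).prod (radMeasure d ℓ))) = A.trace ∧
    ProbabilityTheory.variance (fun ω => hutchppEst A (Q ω.1) ω.2)
        ((gaussMeasure d q).prod (radMeasure d ℓ)) ≤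
      (16 / ((m : ℝ) - 2) ^ 2) * A.trace ^ 2 := by
  have hq_sub_one : (q : ℝ) - 1 = (m - 2) / 4 := by
    rify at hq
    linarith
  have hℓ_eq : (ℓ : ℝ) = (m - 2) / 2 := by
    rify [show 2 ≤ m by omega] at hl
    linarith
  convert stmt9_general (show 2 ≤ q by omega) (show 0 < ℓ by omega) hA hQmeas hQorth hQspan using 3
  rw [hq_sub_one, hℓ_eq, div_mul_div_comm, ← sq, div_div_eq_mul_div]
  norm_num
end
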